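/- There exist positive numerical constants ρ_r ≤ 1/10, ρ_s, and c such that the following holds. Under the observation model with incoherence parameter ν, if r ≤ ρ_r · n2 · ν⁻¹ · (log n1)⁻² and m ≤ ρ_s · n1 · n2, then with probability at least 1 − c·n1^{−10} over the random support Ω and the random signs, every minimizer (L̂, Ŝ) of the √PCP problem with λ = 1/√n1 and μ = √(n2/2) satisfies ‖(L̂, Ŝ) − (L0, S0)‖_F ≤ 560·√(n1·n2)·‖Z0‖_F. -/

import Mathlib

open Matrix
open scoped BigOperators

/-- Frobenius norm of a real matrix. -/
noncomputable def frob {n1 n2 : ℕ} (A : Matrix (Fin n1) (Fin n2) ℝ) : ℝ :=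
  Real.sqrt (∑ i, ∑ j, A i j ^ 2)

/-- Entrywise ℓ¹ norm. -/
noncomputable def l1norm {n1 n2 : ℕ} (A : Matrix (Fin n1) (Fin n2) ℝ) : ℝ :=
  ∑ i, ∑ j, |A i j|

/-- Trace inner product ⟨A,B⟩ = trace(AᵀB). -/
noncomputable def minner {n1 n2 : ℕ} (A B : Matrix (Fin n1) (Fin n2) ℝ) : ℝ :=
  ∑ i, ∑ j, A i j * B i j

/-- Spectral norm (largest singular value), as the ℓ²→ℓ² operator norm. -/
noncomputable def spec {n1 n2 : ℕ} (A : Matrix (Fin n1) (Fin n2) ℝ) : ℝ :=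
  sSup {c : ℝ | ∃ x : Fin n2 → ℝ, (∑ j, x j ^ 2) ≤ 1 ∧
    c = Real.sqrt (∑ i, (∑ j, A i j * x j) ^ 2)}

/-- Nuclear norm (sum of singular values), via duality with the spectral norm. -/
noncomputable def nuc {n1 n2 : ℕ} (A : Matrix (Fin n1) (Fin n2) ℝ) : ℝ :=
  sSup {c : ℝ | ∃ B : Matrix (Fin n1) (Fin n2) ℝ, spec B ≤ 1 ∧ c = minner A B}

/-- P_Ω: the matrix agreeing with `M` on `Ω` and zero off `Ω`. -/
noncomputable def projS {n1 n2 : ℕ} (Ω : Finset (Fin n1 × Fin n2))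
    (M : Matrix (Fin n1) (Fin n2) ℝ) : Matrix (Fin n1) (Fin n2) ℝ :=
  Matrix.of fun i j => if (i, j) ∈ Ω then M i j else 0

/-- Entrywise sign matrix. -/
noncomputable def signM {n1 n2 : ℕ} (A : Matrix (Fin n1) (Fin n2) ℝ) :
    Matrix (Fin n1) (Fin n2) ℝ :=
  Matrix.of fun i j => Real.sign (A i j)

/-- The tangent space T = {UQᵀ + RVᵀ}. -/
def memT {n1 n2 r : ℕ} (U : Matrix (Fin n1) (Fin r) ℝ) (V : Matrix (Fin n2) (Fin r) ℝ)
    (M : Matrix (Fin n1) (Fin n2) ℝ) : Prop :=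
  ∃ (Q : Matrix (Fin n2) (Fin r) ℝ) (R : Matrix (Fin n1) (Fin r) ℝ), M = U * Qᵀ + R * Vᵀ

/-- Membership in T⊥, the orthogonal complement of the tangent space. -/
def memTperp {n1 n2 r : ℕ} (U : Matrix (Fin n1) (Fin r) ℝ) (V : Matrix (Fin n2) (Fin r) ℝ)
    (W : Matrix (Fin n1) (Fin n2) ℝ) : Prop :=
  ∀ M, memT U V M → minner W M = 0

/-- (L̂, Ŝ) is a global minimizer of the √PCP objective
`‖L‖_* + λ‖S‖₁ + μ‖L + S − D‖_F`. -/
def IsRootPCPMin {n1 n2 : ℕ} (D : Matrix (Fin n1) (Fin n2) ℝ) (lam mu : ℝ)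
    (Lh Sh : Matrix (Fin n1) (Fin n2) ℝ) : Prop :=
  ∀ L S : Matrix (Fin n1) (Fin n2) ℝ,
    nuc Lh + lam * l1norm Sh + mu * frob (Lh + Sh - D) ≤
      nuc L + lam * l1norm S + mu * frob (L + S - D)

/-- (L̂, Ŝ) is a minimizer of StablePCP_c(δ):
minimize `‖L‖_* + λ‖S‖₁` subject to `‖L + S − D‖_F ≤ δ`. -/
def IsStablePCPMin {n1 n2 : ℕ} (D : Matrix (Fin n1) (Fin n2) ℝ) (lam δ : ℝ)
    (Lh Sh : Matrix (Fin n1) (Fin n2) ℝ) : Prop :=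
  frob (Lh + Sh - D) ≤ δ ∧
    ∀ L S : Matrix (Fin n1) (Fin n2) ℝ, frob (L + S - D) ≤ δ →
      nuc Lh + lam * l1norm Sh ≤ nuc L + lam * l1norm S

/-- Frobenius distance between pairs: ‖(L,S) − (L',S')‖_F. -/
noncomputable def pairDist {n1 n2 : ℕ} (L S L' S' : Matrix (Fin n1) (Fin n2) ℝ) : ℝ :=
  Real.sqrt (frob (L - L') ^ 2 + frob (S - S') ^ 2)

/-- Sample space of the random sparsity model: a uniformly random support of
cardinality m together with iid uniform random signs. -/
abbrev SampleSpace (n1 n2 m : ℕ) : Type :=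
  {Ω : Finset (Fin n1 × Fin n2) // Ω.card = m} × ((Fin n1 × Fin n2) → Bool)

/-- The sparse matrix S0 built from fixed magnitudes `a` and a random sample:
S0 vanishes off Ω and equals ±a on Ω according to the random signs. -/
noncomputable def sparseOf {n1 n2 m : ℕ} (a : Fin n1 × Fin n2 → ℝ) (ω : SampleSpace n1 n2 m) :
    Matrix (Fin n1) (Fin n2) ℝ :=
  Matrix.of fun i j =>
    if (i, j) ∈ ω.1.1 then (if ω.2 (i, j) then a (i, j) else -a (i, j)) else 0

open Classical in
/-- Uniform probability of an event on a finite sample space. -/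
noncomputable def unifProb {α : Type*} [Fintype α] (E : α → Prop) : ℝ :=
  ((Finset.univ.filter fun a => E a).card : ℝ) / (Fintype.card α : ℝ)

namespace SqrtPCP

/-! ### Weighted expectations on finite types -/

section Expectation

variable {Ξ : Type*} [Fintype Ξ]

/-- Expectation of `f` with respect to the weights `w`. -/
noncomputable def wexp (w : Ξ → ℝ) (f : Ξ → ℝ) : ℝ := ∑ x, w x * f x

open Classical in
/-- Total weight of the event `E`. -/
noncomputable def wprob (w : Ξ → ℝ) (E : Ξ → Prop) : ℝ := wexp w fun x => if E x then 1 else 0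

variable {w : Ξ → ℝ}

lemma wexp_mono (hw : ∀ x, 0 ≤ w x) {f g : Ξ → ℝ} (h : ∀ x, f x ≤ g x) :
    wexp w f ≤ wexp w g :=
  Finset.sum_le_sum fun x _ => mul_le_mul_of_nonneg_left (h x) (hw x)

lemma wexp_add (f g : Ξ → ℝ) : wexp w (fun x => f x + g x) = wexp w f + wexp w g := by
  simp [wexp, mul_add, Finset.sum_add_distrib]

lemma wexp_const_mul (c : ℝ) (f : Ξ → ℝ) : wexp w (fun x => c * f x) = c * wexp w f := by
  simp [wexp, Finset.mul_sum, mul_left_comm]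

lemma wexp_sum {κ : Type*} (s : Finset κ) (f : κ → Ξ → ℝ) :
    wexp w (fun x => ∑ i ∈ s, f i x) = ∑ i ∈ s, wexp w (f i) := by
  simp only [wexp, Finset.mul_sum]
  exact Finset.sum_comm

lemma wprob_mono (hw : ∀ x, 0 ≤ w x) {E F : Ξ → Prop} (h : ∀ x, E x → F x) :
    wprob w E ≤ wprob w F := by
  refine wexp_mono hw fun x => ?_
  by_cases hE : E x
  · simp [hE, h x hE]
  · simp only [hE, if_false]; split_ifs <;> norm_num

lemma wprob_or_le (hw : ∀ x, 0 ≤ w x) (E F : Ξ → Prop) :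
    wprob w (fun x => E x ∨ F x) ≤ wprob w E + wprob w F := by
  rw [wprob, wprob, wprob, ← wexp_add]
  refine wexp_mono hw fun x => ?_
  by_cases hE : E x <;> by_cases hF : F x <;> simp [hE, hF]

lemma wprob_exists_le (hw : ∀ x, 0 ≤ w x) {κ : Type*} (s : Finset κ) (E : κ → Ξ → Prop)
    {t : ℝ} (h : ∀ i ∈ s, wprob w (E i) ≤ t) :
    wprob w (fun x => ∃ i ∈ s, E i x) ≤ s.card * t := by
  have h1 : wprob w (fun x => ∃ i ∈ s, E i x) ≤ ∑ i ∈ s, wprob w (E i) := by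
    simp only [wprob]
    rw [← wexp_sum]
    refine wexp_mono hw fun x => ?_
    have hnn : ∀ i ∈ s, (0 : ℝ) ≤ (open Classical in if E i x then 1 else 0) := fun i _ => by
      split_ifs <;> norm_num
    split_ifs with hx
    · obtain ⟨i, hi, hE⟩ := hx
      refine le_trans ?_ (Finset.single_le_sum hnn hi)
      simp [hE]
    · exact Finset.sum_nonneg hnn
  refine h1.trans ((Finset.sum_le_sum h).trans ?_)
  simp

lemma wprob_le_of_wexp (hw : ∀ x, 0 ≤ w x) {E : Ξ → Prop} {f : Ξ → ℝ} {a : ℝ} (ha : 0 < a)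
    (hf : ∀ x, 0 ≤ f x) (hE : ∀ x, E x → a ≤ f x) : wprob w E ≤ a⁻¹ * wexp w f := by
  rw [wprob, ← wexp_const_mul]
  refine wexp_mono hw fun x => ?_
  split_ifs with hx
  · rw [← inv_mul_cancel₀ ha.ne']
    exact mul_le_mul_of_nonneg_left (hE x hx) (inv_nonneg.2 ha.le)
  · exact mul_nonneg (inv_nonneg.2 ha.le) (hf x)

lemma wprob_le_exp (hw : ∀ x, 0 ≤ w x) {F : Ξ → ℝ} {s τ B : ℝ} (hs : 0 ≤ s)
    (h : wexp w (fun x => Real.exp (s * F x)) ≤ Real.exp B) :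
    wprob w (fun x => τ < F x) ≤ Real.exp (B - s * τ) := by
  refine (wprob_le_of_wexp hw (Real.exp_pos (s * τ)) (fun x => (Real.exp_pos (s * F x)).le)
    fun x hx => Real.exp_le_exp.2 (mul_le_mul_of_nonneg_left (le_of_lt hx) hs)).trans ?_
  rw [sub_eq_add_neg, add_comm, Real.exp_add, Real.exp_neg]
  exact mul_le_mul_of_nonneg_left h (by positivity)

/-- Two-sided tail bound from a bound on the exponential moments at `±s`. -/
lemma wprob_abs_le_exp (hw : ∀ x, 0 ≤ w x) {F : Ξ → ℝ} {s τ B : ℝ} (hs : 0 ≤ s)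
    (h : wexp w (fun x => Real.exp (s * F x)) ≤ Real.exp B)
    (h' : wexp w (fun x => Real.exp (-s * F x)) ≤ Real.exp B) :
    wprob w (fun x => τ < |F x|) ≤ 2 * Real.exp (B - s * τ) := by
  refine (wprob_mono hw (F := fun x => τ < F x ∨ τ < -F x) fun x hx => lt_abs.1 hx).trans ?_
  refine (wprob_or_le hw _ _).trans ?_
  rw [two_mul]
  refine add_le_add (wprob_le_exp hw hs h) (wprob_le_exp hw hs ?_)
  simpa only [mul_neg, neg_mul] using h'

lemma wexp_prod {Ξ' : Type*} [Fintype Ξ'] (w' : Ξ' → ℝ) (f : Ξ × Ξ' → ℝ) :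
    wexp (fun x : Ξ × Ξ' => w x.1 * w' x.2) f =
      wexp w fun x => wexp w' fun y => f (x, y) := by
  simp only [wexp, Fintype.sum_prod_type, Finset.mul_sum, mul_assoc]

end Expectation

/-! ### Independent Bernoulli variables -/

section Bernoulli

variable {ι : Type*} [Fintype ι]

/-- The weights of a family of independent Bernoulli variables of parameter `p`. -/
noncomputable def bernW (p : ℝ) (b : ι → Bool) : ℝ := ∏ e, if b e then p else 1 - p

lemma bernW_nonneg {p : ℝ} (h0 : 0 ≤ p) (h1 : p ≤ 1) (b : ι → Bool) : 0 ≤ bernW p b :=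
  Finset.prod_nonneg fun e _ => by split_ifs <;> linarith

variable [DecidableEq ι]

lemma wexp_bernW_prod (p : ℝ) (g : ι → Bool → ℝ) :
    wexp (bernW p) (fun b => ∏ e, g e (b e)) =
      ∏ e, (p * g e true + (1 - p) * g e false) := by
  simp only [wexp, bernW, ← Finset.prod_mul_distrib]
  have h := Finset.prod_univ_sum (fun _ : ι => (Finset.univ : Finset Bool))
    (fun e x => (if x then p else 1 - p) * g e x)
  rw [Fintype.piFinset_univ] at h
  rw [← h]
  simp

lemma wexp_bernW_const (p c : ℝ) : wexp (bernW p : (ι → Bool) → ℝ) (fun _ => c) = c := by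
  have h := wexp_bernW_prod (ι := ι) p (fun _ _ => 1)
  simp only [Finset.prod_const_one, mul_one, add_sub_cancel] at h
  have h2 := wexp_const_mul (w := (bernW p : (ι → Bool) → ℝ)) c (fun _ => 1)
  rw [h] at h2
  simpa using h2

lemma wexp_bernW_exp (p s : ℝ) (g : ι → Bool → ℝ) :
    wexp (bernW p) (fun b => Real.exp (s * ∑ e, g e (b e))) =
      ∏ e, (p * Real.exp (s * g e true) + (1 - p) * Real.exp (s * g e false)) := by
  rw [← wexp_bernW_prod p fun e x => Real.exp (s * g e x)]
  simp [Finset.mul_sum, Real.exp_sum]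

lemma wexp_bernW_exp_le {p : ℝ} (h0 : 0 ≤ p) (h1 : p ≤ 1) {s B : ℝ} {g : ι → Bool → ℝ}
    {v : ι → ℝ}
    (h : ∀ e, p * Real.exp (s * g e true) + (1 - p) * Real.exp (s * g e false) ≤
      Real.exp (v e)) (hv : ∑ e, v e ≤ B) :
    wexp (bernW p) (fun b => Real.exp (s * ∑ e, g e (b e))) ≤ Real.exp B := by
  rw [wexp_bernW_exp]
  refine (Finset.prod_le_prod (fun e _ => ?_) fun e _ => h e).trans ?_
  · have : 0 ≤ 1 - p := by linarith
    positivity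
  · rw [← Real.exp_sum]
    exact Real.exp_le_exp.2 hv

/-- Resampling one coordinate does not change the expectation. -/
lemma wexp_bernW_update (p : ℝ) (e : ι) (f : (ι → Bool) → ℝ) :
    wexp (bernW p) f = wexp (bernW p) fun b =>
      p * f (Function.update b e true) + (1 - p) * f (Function.update b e false) := by
  have key : ∀ F : (ι → Bool) → ℝ, wexp (bernW p) F =
      ∑ y : {j // j ≠ e} → Bool, (∏ j, if y j then p else 1 - p) *
        (p * F ((Equiv.funSplitAt e Bool).symm (true, y)) +
          (1 - p) * F ((Equiv.funSplitAt e Bool).symm (false, y))) := by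
    intro F
    rw [wexp, ← (Equiv.funSplitAt e Bool).symm.sum_comp, Fintype.sum_prod_type]
    simp only [Fintype.sum_bool]
    rw [← Finset.sum_add_distrib]
    refine Finset.sum_congr rfl fun y _ => ?_
    have hw : ∀ x, bernW p ((Equiv.funSplitAt e Bool).symm (x, y)) =
        (if x then p else 1 - p) * ∏ j, if y j then p else 1 - p := by
      intro x
      rw [bernW, Fintype.prod_eq_mul_prod_subtype_ne _ e]
      congr 1
      · simp
      · refine Finset.prod_congr rfl fun j _ => ?_
        simp [j.2]
    rw [hw, hw]
    simp only [if_true, Bool.false_eq_true, if_false]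
    ring
  rw [key f, key]
  refine Finset.sum_congr rfl fun y _ => ?_
  have hu : ∀ x x', Function.update ((Equiv.funSplitAt e Bool).symm (x, y)) e x' =
      (Equiv.funSplitAt e Bool).symm (x', y) := by
    intro x x'
    ext j
    by_cases hj : j = e
    · subst hj; simp
    · simp [hj]
  simp only [hu]
  ring

/-- The coordinatewise conjunction of two independent Bernoulli families is Bernoulli. -/
lemma wexp_bernW_and (p q : ℝ) (f : (ι → Bool) → ℝ) :
    wexp (bernW (p * q)) f =
      wexp (bernW p) fun b => wexp (bernW q) fun b' => f fun e => b e && b' e := by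
  have hf : ∀ x : ι → Bool, f x = ∑ c : ι → Bool, f c * ∏ e, if x e = c e then (1 : ℝ) else 0 := by
    intro x
    rw [Finset.sum_eq_single x]
    · simp
    · intro c _ hc
      obtain ⟨e, he⟩ := Function.ne_iff.1 hc
      rw [Finset.prod_eq_zero (Finset.mem_univ e) (by simp [he.symm]), mul_zero]
    · simp
  have h1 : wexp (bernW (p * q)) f = ∑ c : ι → Bool, f c *
      wexp (bernW (p * q)) fun b => ∏ e, if b e = c e then (1 : ℝ) else 0 := by
    simp only [← wexp_const_mul]
    rw [← wexp_sum]
    exact congrArg _ (funext hf)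
  have h2 : (wexp (bernW p) fun b => wexp (bernW q) fun b' => f fun e => b e && b' e) =
      ∑ c : ι → Bool, f c * wexp (bernW p) fun b => wexp (bernW q) fun b' =>
        ∏ e, if (b e && b' e) = c e then (1 : ℝ) else 0 := by
    simp only [← wexp_const_mul]
    rw [← wexp_sum]
    refine congrArg _ (funext fun b => ?_)
    rw [← wexp_sum]
    exact congrArg _ (funext fun b' => hf _)
  rw [h1, h2]
  refine Finset.sum_congr rfl fun c _ => ?_
  congr 1
  rw [wexp_bernW_prod (p * q) fun e x => if x = c e then (1 : ℝ) else 0]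
  have h3 : ∀ b : ι → Bool, (wexp (bernW q) fun b' : ι → Bool =>
      ∏ e, if (b e && b' e) = c e then (1 : ℝ) else 0) =
      ∏ e, (q * (if b e = c e then (1 : ℝ) else 0) + (1 - q) * if false = c e then 1 else 0) := by
    intro b
    rw [wexp_bernW_prod q fun e x => if (b e && x) = c e then (1 : ℝ) else 0]
    simp
  simp only [h3]
  rw [wexp_bernW_prod p fun e x =>
    (q * (if x = c e then (1 : ℝ) else 0) + (1 - q) * if false = c e then 1 else 0)]
  refine Finset.prod_congr rfl fun e _ => ?_
  cases c e
  · simp; ring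
  · simp

end Bernoulli

/-! ### Elementary exponential inequalities -/

lemma exp_mul_le_cosh_add {u : ℝ} (hu : |u| ≤ 1) (y : ℝ) :
    Real.exp (u * y) ≤ Real.cosh y + u * Real.sinh y := by
  obtain ⟨h1, h2⟩ := abs_le.1 hu
  have h := convexOn_exp.2 (Set.mem_univ y) (Set.mem_univ (-y))
    (show (0 : ℝ) ≤ (1 + u) / 2 by linarith) (show (0 : ℝ) ≤ (1 - u) / 2 by linarith) (by ring)
  simp only [smul_eq_mul] at h
  have e : (1 + u) / 2 * y + (1 - u) / 2 * -y = u * y := by ring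
  rw [e] at h
  rw [Real.cosh_eq, Real.sinh_eq]
  linarith

/-- Hoeffding bound for a normalized centered Bernoulli variable. -/
lemma bern_exp_le_hoeffding {q : ℝ} (h0 : 0 < q) (h1 : q ≤ 1) (y : ℝ) :
    q * Real.exp (y * (1 / q - 1)) + (1 - q) * Real.exp (y * (0 / q - 1)) ≤
      Real.exp ((y / q) ^ 2 / 2) := by
  have e1 : y * (1 / q - 1) = (1 - q) * (y / q) := by field_simp
  have e2 : y * (0 / q - 1) = (-q) * (y / q) := by field_simp; ring
  have b1 := exp_mul_le_cosh_add (u := 1 - q) (abs_le.2 ⟨by linarith, by linarith⟩) (y / q)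
  have b2 := exp_mul_le_cosh_add (u := -q) (abs_le.2 ⟨by linarith, by linarith⟩) (y / q)
  rw [e1, e2]
  refine le_trans ?_ (Real.cosh_le_exp_half_sq (y / q))
  nlinarith [mul_le_mul_of_nonneg_left b1 h0.le,
    mul_le_mul_of_nonneg_left b2 (show 0 ≤ 1 - q by linarith)]

/-- Bernstein bound for a normalized centered Bernoulli variable. -/
lemma bern_exp_le_bernstein {q : ℝ} (h0 : 0 < q) {y : ℝ} (hy : |y / q| ≤ 1) :
    q * Real.exp (y * (1 / q - 1)) + (1 - q) * Real.exp (y * (0 / q - 1)) ≤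
      Real.exp (y ^ 2 / q) := by
  have e1 : y * (1 / q - 1) = y / q + -y := by field_simp; ring
  have e2 : y * (0 / q - 1) = -y := by ring
  rw [e1, e2, Real.exp_add]
  have h := (abs_le.1 (Real.abs_exp_sub_one_sub_id_le hy)).2
  have h3 : 1 + q * (Real.exp (y / q) - 1) ≤ Real.exp (q * (Real.exp (y / q) - 1)) := by
    linarith [Real.add_one_le_exp (q * (Real.exp (y / q) - 1))]
  have h4 : q * (Real.exp (y / q) - 1) ≤ y + y ^ 2 / q := by
    have e3 : y + y ^ 2 / q = q * (y / q + (y / q) ^ 2) := by field_simp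
    rw [e3]
    exact mul_le_mul_of_nonneg_left (by linarith) h0.le
  calc q * (Real.exp (y / q) * Real.exp (-y)) + (1 - q) * Real.exp (-y)
      = (1 + q * (Real.exp (y / q) - 1)) * Real.exp (-y) := by ring
    _ ≤ Real.exp (y + y ^ 2 / q) * Real.exp (-y) :=
        mul_le_mul_of_nonneg_right (h3.trans (Real.exp_le_exp.2 h4)) (Real.exp_pos _).le
    _ = Real.exp (y ^ 2 / q) := by rw [← Real.exp_add]; congr 1; ring

/-- A sparse random sign has arbitrarily small sub-Gaussian constant. -/
lemma exists_sparse_cosh_le {κ : ℝ} (hκ : 0 < κ) :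
    ∃ ρ₀ : ℝ, 0 < ρ₀ ∧ ∀ ρ, 0 ≤ ρ → ρ ≤ ρ₀ → ρ ≤ 1 → ∀ t : ℝ,
      1 - ρ + ρ * Real.cosh t ≤ Real.exp (κ * t ^ 2 / 2) := by
  set T : ℝ := 2 / κ with hT
  have hTp : 0 < T := by positivity
  refine ⟨κ / Real.exp (T ^ 2 / 2), by positivity, fun ρ h0 hρ h1 t => ?_⟩
  have hc1 := Real.one_le_cosh t
  rcases le_or_gt |t| T with ht | ht
  · have hx : t ^ 2 / 2 ≤ T ^ 2 / 2 := by
      have := sq_le_sq' (by linarith [neg_abs_le t]) ((le_abs_self t).trans ht)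
      linarith
    have hb : Real.exp (t ^ 2 / 2) - 1 ≤ t ^ 2 / 2 * Real.exp (T ^ 2 / 2) := by
      have h2 : Real.exp (t ^ 2 / 2) - 1 ≤ t ^ 2 / 2 * Real.exp (t ^ 2 / 2) := by
        have h3 := Real.add_one_le_exp (-(t ^ 2 / 2))
        have h4 : Real.exp (t ^ 2 / 2) * Real.exp (-(t ^ 2 / 2)) = 1 := by
          rw [← Real.exp_add]; simp
        nlinarith [Real.exp_pos (t ^ 2 / 2)]
      exact h2.trans (mul_le_mul_of_nonneg_left (Real.exp_le_exp.2 hx) (by positivity))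
    have hρ' : ρ * Real.exp (T ^ 2 / 2) ≤ κ := by
      rwa [le_div_iff₀ (Real.exp_pos _)] at hρ
    have hch := Real.cosh_le_exp_half_sq t
    have h5 : ρ * (Real.cosh t - 1) ≤ κ * t ^ 2 / 2 := by
      calc ρ * (Real.cosh t - 1) ≤ ρ * (t ^ 2 / 2 * Real.exp (T ^ 2 / 2)) :=
            mul_le_mul_of_nonneg_left (by linarith) h0
        _ = (ρ * Real.exp (T ^ 2 / 2)) * (t ^ 2 / 2) := by ring
        _ ≤ κ * (t ^ 2 / 2) := mul_le_mul_of_nonneg_right hρ' (by positivity)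
        _ = _ := by ring
    linarith [Real.add_one_le_exp (κ * t ^ 2 / 2)]
  · have h6 : Real.cosh t ≤ Real.exp |t| := by
      rw [← Real.cosh_abs, Real.cosh_eq]
      have : Real.exp (-|t|) ≤ Real.exp |t| := Real.exp_le_exp.2 (by linarith [abs_nonneg t])
      linarith
    have h7 : |t| ≤ κ * t ^ 2 / 2 := by
      have : κ * T = 2 := by rw [hT]; field_simp
      rw [← sq_abs]
      nlinarith [abs_nonneg t, mul_lt_mul_of_pos_left ht hκ]
    calc 1 - ρ + ρ * Real.cosh t ≤ Real.cosh t := by nlinarith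
      _ ≤ _ := h6.trans (Real.exp_le_exp.2 h7)

/-! ### Moments of random compressions of a projection -/

section Moments

variable {ι : Type*} [Fintype ι] [DecidableEq ι]

/-- Simultaneous spectral representation of all powers of a symmetric matrix. -/
lemma exists_spectral {A : Matrix ι ι ℝ} (hA : Aᵀ = A) :
    ∃ ev : ι → ℝ, (∀ n, (A ^ n).trace = ∑ i, ev i ^ n) ∧
      ∀ a : ι → ℝ, ∃ c : ι → ℝ, ∀ n, a ⬝ᵥ (A ^ n *ᵥ a) = ∑ i, ev i ^ n * c i ^ 2 := by
  have hH : A.IsHermitian := by rw [Matrix.IsHermitian, conjTranspose_eq_transpose_of_trivial, hA]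
  set Q : Matrix ι ι ℝ := (hH.eigenvectorUnitary : Matrix ι ι ℝ)
  have hQQ : Qᵀ * Q = 1 := by
    have := (Matrix.mem_unitaryGroup_iff').1 hH.eigenvectorUnitary.2
    rwa [star_eq_conjTranspose, conjTranspose_eq_transpose_of_trivial] at this
  obtain ⟨ev, hspec⟩ : ∃ ev : ι → ℝ, A = Q * diagonal ev * Qᵀ := by
    refine ⟨hH.eigenvalues, ?_⟩
    have := hH.spectral_theorem
    rw [Unitary.conjStarAlgAut_apply, star_eq_conjTranspose,
      conjTranspose_eq_transpose_of_trivial] at this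
    exact this
  clear_value Q
  have hpow : ∀ n, A ^ n = Q * diagonal (fun i => ev i ^ n) * Qᵀ := by
    intro n
    induction n with
    | zero =>
      have : Q * Qᵀ = 1 := mul_eq_one_comm.1 hQQ
      simp [this]
    | succ n ih =>
      rw [pow_succ, ih]
      conv_lhs => rw [hspec]
      have : ∀ D E : Matrix ι ι ℝ, Q * D * Qᵀ * (Q * E * Qᵀ) = Q * (D * E) * Qᵀ := by
        intro D E
        calc Q * D * Qᵀ * (Q * E * Qᵀ) = Q * D * (Qᵀ * Q) * E * Qᵀ := by
              simp only [Matrix.mul_assoc]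
          _ = _ := by rw [hQQ]; simp only [Matrix.mul_assoc, Matrix.mul_one]
      rw [this, diagonal_mul_diagonal]
      simp only [pow_succ]
  refine ⟨ev, fun n => ?_, fun a => ⟨Qᵀ *ᵥ a, fun n => ?_⟩⟩
  · rw [hpow, Matrix.trace_mul_comm, ← Matrix.mul_assoc, hQQ, Matrix.one_mul, trace_diagonal]
  · rw [hpow, ← mulVec_mulVec, ← mulVec_mulVec, dotProduct_mulVec, ← mulVec_transpose]
    simp only [dotProduct, mulVec_diagonal]
    exact Finset.sum_congr rfl fun i _ => by ring

lemma pow_sub_pow_eq_sum {R : Type*} [Ring R] (X Y : R) (n : ℕ) :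
    X ^ n - Y ^ n = ∑ q ∈ Finset.range n, X ^ q * (X - Y) * Y ^ (n - 1 - q) := by
  induction n with
  | zero => simp
  | succ n ih =>
    rw [Finset.sum_range_succ]
    have h : ∑ q ∈ Finset.range n, X ^ q * (X - Y) * Y ^ (n + 1 - 1 - q) =
        (X ^ n - Y ^ n) * Y := by
      rw [ih, Finset.sum_mul]
      refine Finset.sum_congr rfl fun q hq => ?_
      have : n + 1 - 1 - q = (n - 1 - q) + 1 := by
        have := Finset.mem_range.1 hq; omega
      rw [this, pow_succ, ← mul_assoc]
    rw [h]
    simp [pow_succ]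
    noncomm_ring

lemma pow_mul_pow_le_add (x y : ℝ) {m q : ℕ} (hq : q ≤ 2 * m) :
    x ^ q * y ^ (2 * m - q) ≤ x ^ (2 * m) + y ^ (2 * m) := by
  have hx : x ^ (2 * m) = |x| ^ (2 * m) := by rw [pow_mul, pow_mul, sq_abs]
  have hy : y ^ (2 * m) = |y| ^ (2 * m) := by rw [pow_mul, pow_mul, sq_abs]
  have h1 : x ^ q * y ^ (2 * m - q) ≤ |x| ^ q * |y| ^ (2 * m - q) := by
    rw [← abs_pow, ← abs_pow, ← abs_mul]; exact le_abs_self _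
  rw [hx, hy]
  refine h1.trans ?_
  rcases le_total |x| |y| with h | h
  · calc |x| ^ q * |y| ^ (2 * m - q) ≤ |y| ^ q * |y| ^ (2 * m - q) := by gcongr
      _ = |y| ^ (2 * m) := by rw [← pow_add]; congr 1; omega
      _ ≤ _ := by linarith [pow_nonneg (abs_nonneg x) (2 * m)]
  · calc |x| ^ q * |y| ^ (2 * m - q) ≤ |x| ^ q * |x| ^ (2 * m - q) := by gcongr
      _ = |x| ^ (2 * m) := by rw [← pow_add]; congr 1; omega
      _ ≤ _ := by linarith [pow_nonneg (abs_nonneg y) (2 * m)]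

lemma quadForm_pow_mul_le {A B : Matrix ι ι ℝ} (hA : Aᵀ = A) (hB : Bᵀ = B) (a : ι → ℝ)
    {m q : ℕ} (hq : q ≤ 2 * m) :
    (a ⬝ᵥ (A ^ q *ᵥ a)) * (a ⬝ᵥ (B ^ (2 * m - q) *ᵥ a)) ≤
      (a ⬝ᵥ a) * (a ⬝ᵥ (A ^ (2 * m) *ᵥ a) + a ⬝ᵥ (B ^ (2 * m) *ᵥ a)) := by
  obtain ⟨x, -, hx⟩ := exists_spectral hA
  obtain ⟨y, -, hy⟩ := exists_spectral hB
  obtain ⟨c, hc⟩ := hx a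
  obtain ⟨d, hd⟩ := hy a
  have hc0 := hc 0
  have hd0 := hd 0
  simp only [pow_zero, one_mulVec, one_mul] at hc0 hd0
  rw [hc, hd, mul_add, hc, hd]
  nth_rewrite 1 [hd0]
  rw [hc0, mul_comm (∑ i, d i ^ 2)]
  simp only [Finset.sum_mul_sum]
  rw [← Finset.sum_add_distrib]
  refine Finset.sum_le_sum fun i _ => ?_
  rw [← Finset.sum_add_distrib]
  refine Finset.sum_le_sum fun j _ => ?_
  have := mul_le_mul_of_nonneg_right (pow_mul_pow_le_add (x i) (y j) hq)
    (mul_nonneg (sq_nonneg (c i)) (sq_nonneg (d j)))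
  linarith

variable (G : Matrix ι ι ℝ) (p : ℝ)

/-- The centered random compression `G (diag b - p) G`. -/
noncomputable def compr (b : ι → Bool) : Matrix ι ι ℝ :=
  G * diagonal (fun e => (if b e then 1 else 0) - p) * G

variable {G p}

lemma compr_transpose (hG : Gᵀ = G) (b : ι → Bool) : (compr G p b)ᵀ = compr G p b := by
  simp [compr, transpose_mul, hG, Matrix.mul_assoc]

lemma compr_pow_diag (hG : Gᵀ = G) (n : ℕ) (b : ι → Bool) (e : ι) :
    (G * compr G p b ^ n * G) e e = (G e) ⬝ᵥ (compr G p b ^ n *ᵥ G e) := by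
  have h : ∀ k, G k e = G e k := fun k => by
    conv_lhs => rw [← hG]
    rfl
  rw [Matrix.mul_apply, dotProduct_mulVec]
  simp only [dotProduct, vecMul, Matrix.mul_apply, h]

lemma trace_compr_pow_succ (hG2 : G * G = G) (n : ℕ) (b : ι → Bool) :
    (G * compr G p b ^ (n + 1) * G).trace =
      ∑ e, ((if b e then 1 else 0) - p) * (G * compr G p b ^ n * G) e e := by
  set D : Matrix ι ι ℝ := diagonal (fun e => (if b e then 1 else 0) - p)
  have h : G * compr G p b ^ (n + 1) * G = (G * D) * (G * compr G p b ^ n * G) := by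
    rw [pow_succ']
    calc G * (compr G p b * compr G p b ^ n) * G
        = (G * G) * D * G * compr G p b ^ n * G := by simp only [compr, D, Matrix.mul_assoc]
      _ = _ := by rw [hG2]; simp only [Matrix.mul_assoc]
  rw [h, Matrix.mul_assoc, Matrix.trace_mul_comm]
  have h2 : D * (G * compr G p b ^ n * G) * G = D * (G * compr G p b ^ n * G) := by
    simp only [Matrix.mul_assoc, hG2]
  rw [h2, Matrix.trace]
  exact Finset.sum_congr rfl fun e _ => by simp [D, diagonal_mul]

lemma compr_update_sub (b : ι → Bool) (e : ι) :
    compr G p (Function.update b e true) - compr G p (Function.update b e false) =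
      G * Matrix.single e e 1 * G := by
  rw [compr, compr, ← Matrix.sub_mul, ← Matrix.mul_sub, diagonal_sub]
  congr 2
  ext i j
  by_cases hij : i = j
  · subst hij
    by_cases hi : i = e
    · subst hi; simp
    · simp [hi, Ne.symm hi]
  · rw [diagonal_apply_ne _ hij, Matrix.single_apply, if_neg]
    rintro ⟨rfl, rfl⟩; exact hij rfl

lemma compr_pow_diff (n : ℕ) (b : ι → Bool) (e : ι) :
    (G * compr G p (Function.update b e true) ^ n * G) e e -
      (G * compr G p (Function.update b e false) ^ n * G) e e =
    ∑ q ∈ Finset.range n, (G * compr G p (Function.update b e true) ^ q * G) e e *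
      (G * compr G p (Function.update b e false) ^ (n - 1 - q) * G) e e := by
  rw [← Matrix.sub_apply, ← Matrix.sub_mul, ← Matrix.mul_sub, pow_sub_pow_eq_sum,
    compr_update_sub, Finset.mul_sum, Finset.sum_mul, Matrix.sum_apply]
  refine Finset.sum_congr rfl fun q _ => ?_
  set X := compr G p (Function.update b e true) ^ q
  set Y := compr G p (Function.update b e false) ^ (n - 1 - q)
  have : G * (X * (G * Matrix.single e e 1 * G) * Y) * G =
      (G * X * G) * Matrix.single e e 1 * (G * Y * G) := by
    simp only [Matrix.mul_assoc]
  rw [this, Matrix.mul_assoc, Matrix.mul_apply]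
  rw [Finset.sum_eq_single e]
  · simp
  · intro j _ hj
    rw [Matrix.single_mul_apply_of_ne _ _ _ _ _ hj, mul_zero]
  · simp

/-- One step of the moment recursion. -/
lemma moment_step (hG : Gᵀ = G) (hG2 : G * G = G) (h0 : 0 ≤ p) (h1 : p ≤ 1) {μ₀ : ℝ}
    (hμ : ∀ e, G e e ≤ μ₀) (m : ℕ) :
    wexp (bernW p) (fun b => (G * compr G p b ^ (2 * (m + 1)) * G).trace) ≤
      (2 * m + 1) * μ₀ * wexp (bernW p) (fun b => (G * compr G p b ^ (2 * m) * G).trace) := by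
  have hw := fun b : ι → Bool => bernW_nonneg h0 h1 b
  have hGe : ∀ e, (G e) ⬝ᵥ (G e) = G e e := fun e => by
    conv_rhs => rw [← hG2, Matrix.mul_apply]
    refine Finset.sum_congr rfl fun k _ => ?_
    congr 1
    conv_lhs => rw [← hG]
    rfl
  have hnn : ∀ (b : ι → Bool) e, 0 ≤ (G * compr G p b ^ (2 * m) * G) e e := fun b e => by
    obtain ⟨x, -, hx⟩ := exists_spectral (compr_transpose (p := p) hG b)
    obtain ⟨c, hc⟩ := hx (G e)
    rw [compr_pow_diag hG, hc]
    exact Finset.sum_nonneg fun i _ => mul_nonneg (by rw [pow_mul]; positivity) (sq_nonneg _)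
  have hL : wexp (bernW p) (fun b => (G * compr G p b ^ (2 * (m + 1)) * G).trace) =
      ∑ e, wexp (bernW p) fun b =>
        ((if b e then 1 else 0) - p) * (G * compr G p b ^ (2 * m + 1) * G) e e := by
    rw [← wexp_sum]
    refine congrArg _ (funext fun b => ?_)
    rw [show 2 * (m + 1) = 2 * m + 1 + 1 by ring, trace_compr_pow_succ hG2]
  have hR : wexp (bernW p) (fun b => (G * compr G p b ^ (2 * m) * G).trace) =
      ∑ e, wexp (bernW p) fun b => (G * compr G p b ^ (2 * m) * G) e e := by
    rw [← wexp_sum]; rfl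
  rw [hL, hR, Finset.mul_sum]
  refine Finset.sum_le_sum fun e _ => ?_
  rw [wexp_bernW_update p e, wexp_bernW_update p e (fun b => (G * compr G p b ^ (2 * m) * G) e e),
    ← wexp_const_mul]
  refine wexp_mono hw fun b => ?_
  have hd := compr_pow_diff (G := G) (p := p) (2 * m + 1) b e
  simp only [Function.update_self, if_true, Bool.false_eq_true, if_false]
  set α := (G * compr G p (Function.update b e true) ^ (2 * m) * G) e e with hα
  set β := (G * compr G p (Function.update b e false) ^ (2 * m) * G) e e with hβ
  have hα0 : 0 ≤ α := hnn _ e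
  have hβ0 : 0 ≤ β := hnn _ e
  have hGee : 0 ≤ G e e := by rw [← hGe]; exact Finset.sum_nonneg fun i _ => mul_self_nonneg _
  have hbound : ∑ q ∈ Finset.range (2 * m + 1),
      (G * compr G p (Function.update b e true) ^ q * G) e e *
      (G * compr G p (Function.update b e false) ^ (2 * m + 1 - 1 - q) * G) e e ≤
      (2 * m + 1) * (μ₀ * (α + β)) := by
    have : ∀ q ∈ Finset.range (2 * m + 1),
      (G * compr G p (Function.update b e true) ^ q * G) e e *
      (G * compr G p (Function.update b e false) ^ (2 * m + 1 - 1 - q) * G) e e ≤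
      μ₀ * (α + β) := by
      intro q hq
      have hq' : q ≤ 2 * m := by have := Finset.mem_range.1 hq; omega
      rw [compr_pow_diag hG, compr_pow_diag hG, Nat.add_sub_cancel]
      refine (quadForm_pow_mul_le (compr_transpose hG _) (compr_transpose hG _) (G e) hq').trans ?_
      rw [hGe, ← compr_pow_diag hG, ← compr_pow_diag hG]
      exact mul_le_mul_of_nonneg_right (hμ e) (by linarith)
    refine (Finset.sum_le_sum this).trans ?_
    simp
  rw [← hd] at hbound
  have hμ0 : 0 ≤ μ₀ := hGee.trans (hμ e)
  have hpp : 0 ≤ p * (1 - p) := mul_nonneg h0 (by linarith)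
  have e1 := mul_le_mul_of_nonneg_left hbound hpp
  have hK : 0 ≤ (2 * (m : ℝ) + 1) * μ₀ := by positivity
  have e2 : p * (1 - p) * (α + β) ≤ p * α + (1 - p) * β := by
    nlinarith [mul_nonneg h0 (mul_nonneg h0 hα0), mul_nonneg (by linarith : 0 ≤ 1 - p)
      (mul_nonneg (by linarith : 0 ≤ 1 - p) hβ0)]
  have e3 := mul_le_mul_of_nonneg_left e2 hK
  linarith

lemma moment_bound (hG : Gᵀ = G) (hG2 : G * G = G) (h0 : 0 ≤ p) (h1 : p ≤ 1) {μ₀ : ℝ}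
    (hμ0 : 0 ≤ μ₀) (hμ : ∀ e, G e e ≤ μ₀) (hμ1 : μ₀ ≤ 1) (K m : ℕ) (hm : m ≤ K) :
    wexp (bernW p) (fun b => (G * compr G p b ^ (2 * m) * G).trace) ≤
      (2 * K * μ₀) ^ m * Fintype.card ι := by
  induction m with
  | zero =>
    simp only [mul_zero, pow_zero, Matrix.mul_one, hG2, one_mul]
    rw [wexp_bernW_const, Matrix.trace]
    refine (Finset.sum_le_sum fun e _ => (hμ e).trans hμ1).trans ?_
    simp
  | succ m ih =>
    refine (moment_step hG hG2 h0 h1 hμ m).trans ?_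
    have hmK : (m : ℝ) + 1 ≤ K := by exact_mod_cast hm
    have h2 : (2 * (m : ℝ) + 1) * μ₀ ≤ 2 * K * μ₀ :=
      mul_le_mul_of_nonneg_right (by linarith) hμ0
    refine (mul_le_mul_of_nonneg_left (ih (by omega)) (by positivity)).trans ?_
    rw [pow_succ', mul_assoc (2 * (K : ℝ) * μ₀)]
    exact mul_le_mul_of_nonneg_right h2 (by positivity)

/-- With high probability the random coordinate restriction of a projection with small diagonal
has small norm. -/
lemma wprob_restriction_le (hG : Gᵀ = G) (hG2 : G * G = G) (h0 : 0 ≤ p) (h1 : p ≤ 1) {μ₀ : ℝ}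
    (hμ0 : 0 ≤ μ₀) (hμ : ∀ e, G e e ≤ μ₀) (hμ1 : μ₀ ≤ 1) {σ : ℝ} (hσ : 0 < σ) {m : ℕ}
    (hm : 0 < m) :
    wprob (bernW p) (fun b => ¬ ∀ f : ι → ℝ,
      ∑ e, (if b e then (G *ᵥ f) e ^ 2 else 0) ≤ (σ + p) * ∑ e, f e ^ 2) ≤
      (2 * m * μ₀ / σ ^ 2) ^ m * Fintype.card ι := by
  have hw := fun b : ι → Bool => bernW_nonneg h0 h1 b
  have htr : ∀ b : ι → Bool, (G * compr G p b ^ (2 * m) * G).trace =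
      (compr G p b ^ (2 * m)).trace := by
    intro b
    obtain ⟨k, hk⟩ : ∃ k, 2 * m = k + 1 := ⟨2 * m - 1, by omega⟩
    rw [hk, Matrix.mul_assoc, Matrix.trace_mul_comm, Matrix.mul_assoc, hG2, pow_succ,
      Matrix.mul_assoc]
    congr 2
    rw [compr, Matrix.mul_assoc, hG2]
  have hmark := wprob_le_of_wexp hw (E := fun b => ¬ ∀ f : ι → ℝ,
      ∑ e, (if b e then (G *ᵥ f) e ^ 2 else 0) ≤ (σ + p) * ∑ e, f e ^ 2)
      (f := fun b => (G * compr G p b ^ (2 * m) * G).trace) (a := σ ^ (2 * m)) (by positivity)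
      (fun b => ?_) (fun b hb => ?_)
  · refine hmark.trans ((mul_le_mul_of_nonneg_left
      (moment_bound hG hG2 h0 h1 hμ0 hμ hμ1 m m le_rfl) (by positivity)).trans (le_of_eq ?_))
    rw [div_pow, ← pow_mul]
    ring
  · obtain ⟨x, hx, -⟩ := exists_spectral (compr_transpose (p := p) hG b)
    rw [htr, hx]
    exact Finset.sum_nonneg fun i _ => by rw [pow_mul]; positivity
  · obtain ⟨x, hx, hx'⟩ := exists_spectral (compr_transpose (p := p) hG b)
    rw [htr, hx]
    have hnn : ∀ i ∈ Finset.univ, 0 ≤ x i ^ (2 * m) := fun i _ => by rw [pow_mul]; positivity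
    by_contra hlt
    push Not at hlt
    apply hb
    intro f
    have hxi : ∀ i, x i ≤ σ := by
      intro i
      by_contra hi
      push Not at hi
      have := pow_le_pow_left₀ hσ.le hi.le (2 * m)
      have h3 := Finset.single_le_sum hnn (Finset.mem_univ i)
      linarith
    obtain ⟨c, hc⟩ := hx' f
    have hc0 := hc 0
    have hc1 := hc 1
    simp only [pow_zero, one_mulVec, one_mul, pow_one] at hc0 hc1
    have hff : f ⬝ᵥ f = ∑ e, f e ^ 2 := Finset.sum_congr rfl fun e _ => by ring
    have hsym : ∀ u v : ι → ℝ, u ⬝ᵥ (G *ᵥ v) = (G *ᵥ u) ⬝ᵥ v := fun u v => by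
      rw [dotProduct_mulVec, ← mulVec_transpose, hG]
    have hquad : f ⬝ᵥ (compr G p b *ᵥ f) =
        ∑ e, ((if b e then 1 else 0) - p) * (G *ᵥ f) e ^ 2 := by
      rw [compr, ← mulVec_mulVec, ← mulVec_mulVec, hsym]
      simp only [dotProduct, mulVec_diagonal]
      exact Finset.sum_congr rfl fun e _ => by ring
    have hGf : ∑ e, (G *ᵥ f) e ^ 2 ≤ ∑ e, f e ^ 2 := by
      have h5 : ∑ e, (G *ᵥ f) e ^ 2 = ∑ e, f e * (G *ᵥ f) e := by
        have : (G *ᵥ f) ⬝ᵥ (G *ᵥ f) = f ⬝ᵥ (G *ᵥ f) := by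
          rw [← hsym, mulVec_mulVec, hG2]
        simpa only [dotProduct, sq] using this
      have h6 : 0 ≤ ∑ e, (f e - (G *ᵥ f) e) ^ 2 := Finset.sum_nonneg fun e _ => sq_nonneg _
      have h7 : ∑ e, (f e - (G *ᵥ f) e) ^ 2 =
          ∑ e, f e ^ 2 - 2 * ∑ e, f e * (G *ᵥ f) e + ∑ e, (G *ᵥ f) e ^ 2 := by
        rw [Finset.mul_sum, ← Finset.sum_sub_distrib, ← Finset.sum_add_distrib]
        exact Finset.sum_congr rfl fun e _ => by ring
      linarith
    have hX : f ⬝ᵥ (compr G p b *ᵥ f) ≤ σ * ∑ e, f e ^ 2 := by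
      rw [hc1, ← hff, hc0, Finset.mul_sum]
      exact Finset.sum_le_sum fun i _ => mul_le_mul_of_nonneg_right (hxi i) (sq_nonneg _)
    have hsplit : ∑ e, (if b e then (G *ᵥ f) e ^ 2 else 0) =
        f ⬝ᵥ (compr G p b *ᵥ f) + p * ∑ e, (G *ᵥ f) e ^ 2 := by
      rw [hquad, Finset.mul_sum, ← Finset.sum_add_distrib]
      refine Finset.sum_congr rfl fun e _ => ?_
      split_ifs <;> ring
    rw [hsplit]
    nlinarith

end Moments

/-! ### Spectral bounds through nets -/

section Net

/-- The closed unit ball of a finite-dimensional Euclidean space has a `1/2`-net with at most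
`5 ^ n` elements. -/
lemma exists_net (n : ℕ) : ∃ N : Finset (EuclideanSpace ℝ (Fin n)), N.card ≤ 5 ^ n ∧
    (∀ x ∈ N, ‖x‖ ≤ 1) ∧ ∀ x : EuclideanSpace ℝ (Fin n), ‖x‖ ≤ 1 → ∃ y ∈ N, ‖x - y‖ ≤ 1 / 2 := by
  classical
  let P : ℕ → Prop := fun k => ∃ N : Finset (EuclideanSpace ℝ (Fin n)), N.card = k ∧
    (∀ x ∈ N, ‖x‖ ≤ 1) ∧ ∀ x ∈ N, ∀ y ∈ N, x ≠ y → 1 / 2 ≤ ‖x - y‖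
  have hcard : ∀ k, P k → k ≤ 5 ^ n := by
    rintro k ⟨N, rfl, hN, hsep⟩
    have hinj : Function.Injective fun x : EuclideanSpace ℝ (Fin n) => (2 : ℝ) • x :=
      smul_right_injective _ (by norm_num)
    have h := Besicovitch.card_le_of_separated (N.image fun x => (2 : ℝ) • x) (fun c hc => by
        obtain ⟨x, hx, rfl⟩ := Finset.mem_image.1 hc
        rw [norm_smul]; norm_num; linarith [hN x hx]) (fun c hc d hd hcd => by
        obtain ⟨x, hx, rfl⟩ := Finset.mem_image.1 hc
        obtain ⟨y, hy, rfl⟩ := Finset.mem_image.1 hd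
        have := hsep x hx y hy (fun h => hcd (by rw [h]))
        rw [← smul_sub, norm_smul]; norm_num; linarith)
    rwa [Finset.card_image_of_injective _ hinj, finrank_euclideanSpace_fin] at h
  have h0 : P 0 := ⟨∅, by simp⟩
  obtain ⟨N, hNc, hN, hsep⟩ := Nat.findGreatest_spec (P := P) (Nat.zero_le (5 ^ n)) h0
  have hNle := hcard _ ⟨N, rfl, hN, hsep⟩
  refine ⟨N, hNle, hN, fun x hx => ?_⟩
  by_contra hcon
  push Not at hcon
  have hxN : x ∉ N := fun h => by
    have := hcon x h; simp at this; linarith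
  have hP : P (N.card + 1) := by
    refine ⟨insert x N, Finset.card_insert_of_notMem hxN, ?_, ?_⟩
    · intro y hy
      rcases Finset.mem_insert.1 hy with rfl | hy
      · exact hx
      · exact hN y hy
    · intro y hy z hz hyz
      rcases Finset.mem_insert.1 hy with hy₁ | hy₁ <;>
        rcases Finset.mem_insert.1 hz with hz₁ | hz₁
      · exact absurd (hy₁.trans hz₁.symm) hyz
      · rw [hy₁]; exact (hcon z hz₁).le
      · rw [hz₁, norm_sub_rev]; exact (hcon y hy₁).le
      · exact hsep y hy₁ z hz₁ hyz
  have := Nat.le_findGreatest (hcard _ hP) hP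
  omega

variable {n1 n2 : ℕ}

/-- The matrix with entries `f` has spectral norm at most `t`. -/
def SpecLe (f : Fin n1 × Fin n2 → ℝ) (t : ℝ) : Prop :=
  ∀ (x : Fin n1 → ℝ) (y : Fin n2 → ℝ), ∑ i, x i ^ 2 ≤ 1 → ∑ j, y j ^ 2 ≤ 1 →
    ∑ p, f p * (x p.1 * y p.2) ≤ t

lemma SpecLe.add {f g : Fin n1 × Fin n2 → ℝ} {s t : ℝ} (hf : SpecLe f s) (hg : SpecLe g t) :
    SpecLe (f + g) (s + t) := fun x y hx hy => by
  simp only [Pi.add_apply, add_mul, Finset.sum_add_distrib]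
  exact add_le_add (hf x y hx hy) (hg x y hx hy)

lemma SpecLe.mono {f : Fin n1 × Fin n2 → ℝ} {s t : ℝ} (hf : SpecLe f s) (hst : s ≤ t) :
    SpecLe f t := fun x y hx hy => (hf x y hx hy).trans hst

lemma SpecLe.smul {f : Fin n1 × Fin n2 → ℝ} {s c : ℝ} (hf : SpecLe f s) (hc : 0 ≤ c) :
    SpecLe (c • f) (c * s) := fun x y hx hy => by
  simp only [Pi.smul_apply, smul_eq_mul, mul_assoc, ← Finset.mul_sum]
  exact mul_le_mul_of_nonneg_left (hf x y hx hy) hc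

lemma sum_sq_prod_le_one {x : Fin n1 → ℝ} {y : Fin n2 → ℝ} (hx : ∑ i, x i ^ 2 ≤ 1)
    (hy : ∑ j, y j ^ 2 ≤ 1) : ∑ p : Fin n1 × Fin n2, (x p.1 * y p.2) ^ 2 ≤ 1 := by
  have : ∑ p : Fin n1 × Fin n2, (x p.1 * y p.2) ^ 2 = (∑ i, x i ^ 2) * ∑ j, y j ^ 2 := by
    simp only [mul_pow, Fintype.sum_prod_type, Finset.sum_mul_sum]
  rw [this]
  exact mul_le_one₀ hx (Finset.sum_nonneg fun j _ => sq_nonneg _) hy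

lemma specLe_of_net {N₁ : Finset (EuclideanSpace ℝ (Fin n1))}
    {N₂ : Finset (EuclideanSpace ℝ (Fin n2))}
    (h₁ : ∀ x : EuclideanSpace ℝ (Fin n1), ‖x‖ ≤ 1 → ∃ y ∈ N₁, ‖x - y‖ ≤ 1 / 2)
    (h₂ : ∀ x : EuclideanSpace ℝ (Fin n2), ‖x‖ ≤ 1 → ∃ y ∈ N₂, ‖x - y‖ ≤ 1 / 2)
    {f : Fin n1 × Fin n2 → ℝ} {τ : ℝ}
    (hf : ∀ x ∈ N₁, ∀ y ∈ N₂, ∑ p, f p * (x p.1 * y p.2) ≤ τ) : SpecLe f (4 * τ) := by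
  set T : EuclideanSpace ℝ (Fin n2) →L[ℝ] EuclideanSpace ℝ (Fin n1) :=
    LinearMap.toContinuousLinearMap (Matrix.toEuclideanLin (Matrix.of fun i j => f (i, j))) with hT
  have hin : ∀ (x : EuclideanSpace ℝ (Fin n1)) (y : EuclideanSpace ℝ (Fin n2)),
      inner ℝ x (T y) = ∑ p, f p * (x p.1 * y p.2) := by
    intro x y
    simp only [PiLp.inner_apply, hT, Fintype.sum_prod_type]
    refine Finset.sum_congr rfl fun i _ => ?_
    simp [Matrix.toLpLin_apply, Matrix.mulVec, dotProduct, Finset.sum_mul]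
    exact Finset.sum_congr rfl fun j _ => by ring
  have hnet : ∀ y ∈ N₂, ‖T y‖ ≤ 2 * τ := by
    intro y hy
    set x : EuclideanSpace ℝ (Fin n1) := ‖T y‖⁻¹ • T y with hx
    have hx1 : ‖x‖ ≤ 1 := by
      rw [hx, norm_smul, norm_inv, norm_norm]
      exact inv_mul_le_one
    have hxT : inner ℝ x (T y) = ‖T y‖ := by
      rw [hx, real_inner_smul_left, real_inner_self_eq_norm_sq]
      by_cases h : ‖T y‖ = 0
      · simp [h]
      · field_simp
    obtain ⟨x₀, hx₀, hd⟩ := h₁ x hx1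
    have h3 : inner ℝ (x - x₀) (T y) ≤ 1 / 2 * ‖T y‖ :=
      (real_inner_le_norm _ _).trans (mul_le_mul_of_nonneg_right hd (norm_nonneg _))
    rw [inner_sub_left, hxT, hin] at h3
    linarith [hf x₀ hx₀ y hy]
  have hτ : 0 ≤ τ := by
    obtain ⟨y, hy, -⟩ := h₂ 0 (by simp)
    linarith [hnet y hy, norm_nonneg (T y)]
  have hop : ‖T‖ ≤ 2 * τ + 1 / 2 * ‖T‖ := by
    refine ContinuousLinearMap.opNorm_le_of_unit_norm (by positivity) fun y hy => ?_
    obtain ⟨y₀, hy₀, hd⟩ := h₂ y hy.le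
    have h4 : T y = T y₀ + T (y - y₀) := by rw [← map_add]; congr 1; abel
    rw [h4]
    refine (norm_add_le _ _).trans (add_le_add (hnet y₀ hy₀) ?_)
    refine (T.le_opNorm _).trans ?_
    rw [mul_comm]
    exact mul_le_mul_of_nonneg_right hd (norm_nonneg _)
  intro x y hx hy
  have hx' : ‖(WithLp.toLp 2 x : EuclideanSpace ℝ (Fin n1))‖ ≤ 1 := by
    rw [EuclideanSpace.norm_eq, ← Real.sqrt_one]; refine Real.sqrt_le_sqrt ?_; simpa using hx
  have hy' : ‖(WithLp.toLp 2 y : EuclideanSpace ℝ (Fin n2))‖ ≤ 1 := by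
    rw [EuclideanSpace.norm_eq, ← Real.sqrt_one]; refine Real.sqrt_le_sqrt ?_; simpa using hy
  have h5 := hin (WithLp.toLp 2 x) (WithLp.toLp 2 y)
  simp only at h5
  rw [← h5]
  refine (real_inner_le_norm _ _).trans ?_
  have h6 : ‖T (WithLp.toLp 2 y)‖ ≤ ‖T‖ :=
    (T.le_opNorm _).trans (mul_le_of_le_one_right (norm_nonneg _) hy')
  calc _ ≤ 1 * ‖T‖ := mul_le_mul hx' h6 (norm_nonneg _) zero_le_one
    _ ≤ 4 * τ := by linarith

/-- A random matrix all of whose bilinear forms are sub-Gaussian has small spectral norm with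
overwhelming probability. -/
lemma wprob_specLe {Ξ : Type*} [Fintype Ξ] {w : Ξ → ℝ} (hw : ∀ x, 0 ≤ w x) (hn : n2 ≤ n1)
    (F : Ξ → Fin n1 × Fin n2 → ℝ) {κ : ℝ} (hκ : 0 < κ)
    (hF : ∀ (x : Fin n1 → ℝ) (y : Fin n2 → ℝ), ∑ i, x i ^ 2 ≤ 1 → ∑ j, y j ^ 2 ≤ 1 →
      ∀ s : ℝ, wexp w (fun ξ => Real.exp (s * ∑ p, F ξ p * (x p.1 * y p.2))) ≤
        Real.exp (κ ^ 2 * s ^ 2 / 2)) :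
    wprob w (fun ξ => ¬ SpecLe (F ξ) (16 * (κ * √n1))) ≤ Real.exp (-4 * n1) := by
  classical
  obtain ⟨N₁, hc₁, hb₁, hN₁⟩ := exists_net n1
  obtain ⟨N₂, hc₂, hb₂, hN₂⟩ := exists_net n2
  set τ : ℝ := 4 * (κ * √n1) with hτ
  have hsub : wprob w (fun ξ => ¬ SpecLe (F ξ) (16 * (κ * √n1))) ≤
      wprob w (fun ξ => ∃ z ∈ N₁ ×ˢ N₂, τ < ∑ p, F ξ p * (z.1 p.1 * z.2 p.2)) := by
    refine wprob_mono hw fun ξ hξ => ?_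
    by_contra hcon
    push Not at hcon
    refine hξ ?_
    have := specLe_of_net hN₁ hN₂ (f := F ξ) (τ := τ) fun x hx y hy =>
      hcon (x, y) (Finset.mem_product.2 ⟨hx, hy⟩)
    rwa [hτ, ← mul_assoc, show (4 : ℝ) * 4 = 16 by norm_num] at this
  have hpt : ∀ z ∈ N₁ ×ˢ N₂, wprob w (fun ξ => τ < ∑ p, F ξ p * (z.1 p.1 * z.2 p.2)) ≤
      Real.exp (-8 * n1) := by
    rintro ⟨x, y⟩ hz
    obtain ⟨hx, hy⟩ := Finset.mem_product.1 hz
    have hx' := hb₁ x hx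
    have hy' := hb₂ y hy
    rw [EuclideanSpace.norm_eq, Real.sqrt_le_left zero_le_one] at hx' hy'
    simp only [Real.norm_eq_abs, sq_abs, one_pow] at hx' hy'
    have := wprob_le_exp hw (F := fun ξ => ∑ p, F ξ p * (x p.1 * y p.2)) (τ := τ)
      (s := 4 * √n1 / κ) (by positivity) (hF x y hx' hy' _)
    refine this.trans (Real.exp_le_exp.2 (le_of_eq ?_))
    have hs : √(n1 : ℝ) ^ 2 = n1 := Real.sq_sqrt (Nat.cast_nonneg _)
    rw [hτ]
    field_simp
    rw [hs]
    ring
  refine hsub.trans ((wprob_exists_le hw _ _ hpt).trans ?_)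
  have hcard : (((N₁ ×ˢ N₂).card : ℕ) : ℝ) ≤ 25 ^ n1 := by
    rw [Finset.card_product]
    have : N₁.card * N₂.card ≤ 25 ^ n1 := by
      calc N₁.card * N₂.card ≤ 5 ^ n1 * 5 ^ n2 := Nat.mul_le_mul hc₁ hc₂
        _ ≤ 5 ^ n1 * 5 ^ n1 := Nat.mul_le_mul_left _ (Nat.pow_le_pow_right (by norm_num) hn)
        _ = 25 ^ n1 := by rw [← mul_pow]; norm_num
    exact_mod_cast this
  have h25 : (25 : ℝ) ^ n1 ≤ Real.exp (4 * n1) := by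
    have h1 : (25 : ℝ) ≤ Real.exp 4 := by
      have h2 := Real.exp_one_gt_d9
      have h3 : Real.exp 4 = Real.exp 1 ^ 4 := by rw [← Real.exp_nat_mul]; norm_num
      rw [h3]
      calc (25 : ℝ) ≤ 2.7 ^ 4 := by norm_num
        _ ≤ _ := pow_le_pow_left₀ (by norm_num) (by linarith) 4
    calc (25 : ℝ) ^ n1 ≤ Real.exp 4 ^ n1 := pow_le_pow_left₀ (by norm_num) h1 _
      _ = _ := by rw [← Real.exp_nat_mul]; ring_nf
  calc _ ≤ Real.exp (4 * n1) * Real.exp (-8 * n1) :=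
        mul_le_mul_of_nonneg_right (hcard.trans h25) (Real.exp_pos _).le
    _ = _ := by rw [← Real.exp_add]; ring_nf

end Net

/-! ### The golfing scheme -/

section Golfing

lemma proj_apply_comm {ι : Type*} {G : Matrix ι ι ℝ} (hG : Gᵀ = G) (e f : ι) : G e f = G f e := by
  conv_lhs => rw [← hG]
  rfl

lemma proj_sum_sq {ι : Type*} [Fintype ι] {G : Matrix ι ι ℝ} (hG : Gᵀ = G) (hG2 : G * G = G)
    (e : ι) : ∑ f, G e f ^ 2 = G e e := by
  conv_rhs => rw [← hG2, Matrix.mul_apply]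
  exact Finset.sum_congr rfl fun f _ => by rw [proj_apply_comm hG f e, sq]

lemma proj_abs_le {ι : Type*} [Fintype ι] {G : Matrix ι ι ℝ} (hG : Gᵀ = G) (hG2 : G * G = G)
    {μ₀ : ℝ} (hμ0 : 0 ≤ μ₀) (hμ : ∀ e, G e e ≤ μ₀) (e f : ι) : |G e f| ≤ μ₀ := by
  refine abs_le_of_sq_le_sq ?_ hμ0
  have h : G e f = ∑ k, G e k * G k f := by
    conv_lhs => rw [← hG2, Matrix.mul_apply]
  have h2 : ∑ k, G k f ^ 2 = G f f := by
    rw [← proj_sum_sq hG hG2]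
    exact Finset.sum_congr rfl fun k _ => by rw [proj_apply_comm hG]
  rw [h]
  refine (Finset.sum_mul_sq_le_sq_mul_sq _ _ _).trans ?_
  rw [proj_sum_sq hG hG2, h2, sq]
  refine mul_le_mul (hμ e) (hμ f) ?_ hμ0
  rw [← h2]
  exact Finset.sum_nonneg fun k _ => sq_nonneg _

variable {n1 n2 : ℕ} {G : Matrix (Fin n1 × Fin n2) (Fin n1 × Fin n2) ℝ}

/-- The restriction of `Z` to the entries where `b` fails, rescaled by `q⁻¹`. -/
noncomputable def batch {ι : Type*} (q : ℝ) (Z : ι → ℝ) (b : ι → Bool) (e : ι) : ℝ :=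
  Z e * ((if b e then 0 else 1) / q)

lemma batch_mgf_le {ι : Type*} [Fintype ι] [DecidableEq ι] {q : ℝ} (h0 : 0 < q) (h1 : q ≤ 1)
    {s B : ℝ} {c v : ι → ℝ}
    (h : ∀ e, q * Real.exp (s * c e * (1 / q - 1)) + (1 - q) * Real.exp (s * c e * (0 / q - 1)) ≤
      Real.exp (v e)) (hv : ∑ e, v e ≤ B) :
    wexp (bernW (1 - q)) (fun b : ι → Bool =>
      Real.exp (s * ∑ e, c e * ((if b e then 0 else 1) / q - 1))) ≤ Real.exp B := by
  refine wexp_bernW_exp_le (g := fun e x => c e * ((if x then 0 else 1) / q - 1))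
    (by linarith) (by linarith) (fun e => ?_) hv
  refine le_of_eq_of_le ?_ (h e)
  simp only [if_true, Bool.false_eq_true, if_false, sub_sub_cancel, mul_assoc]
  ring

lemma wprob_batch_sup_le (hG : Gᵀ = G) (hG2 : G * G = G) {μ₀ : ℝ} (hμ0 : 0 < μ₀)
    (hμ : ∀ e, G e e ≤ μ₀) {q : ℝ} (h0 : 0 < q) (h1 : q ≤ 1) {M : ℝ} (hM : 0 < M)
    {Z : Fin n1 × Fin n2 → ℝ} (hZ : G *ᵥ Z = Z) (hZM : ∀ e, |Z e| ≤ M) :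
    wprob (bernW (1 - q)) (fun b => ∃ e, M / 2 < |(Z - G *ᵥ batch q Z b) e|) ≤
      (n1 * n2 : ℝ) * (2 * Real.exp (-q / (16 * μ₀))) := by
  have hw := fun b : Fin n1 × Fin n2 → Bool =>
    bernW_nonneg (p := 1 - q) (by linarith) (by linarith) b
  set s : ℝ := q / (4 * μ₀ * M) with hs
  have hsp : 0 < s := by positivity
  have hrw : ∀ b e, |(Z - G *ᵥ batch q Z b) e| =
      |∑ f, G e f * Z f * ((if b f then 0 else 1) / q - 1)| := by
    intro b e
    have h1 : Z - G *ᵥ batch q Z b = -(G *ᵥ (batch q Z b - Z)) := by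
      rw [mulVec_sub, hZ, neg_sub]
    rw [h1, Pi.neg_apply, abs_neg]
    simp only [mulVec, dotProduct, batch, Pi.sub_apply]
    congr 1
    exact Finset.sum_congr rfl fun f _ => by ring
  have hmgf : ∀ e, ∀ t : ℝ, |t| = s → wexp (bernW (1 - q)) (fun b : Fin n1 × Fin n2 → Bool =>
      Real.exp (t * ∑ f, G e f * Z f * ((if b f then 0 else 1) / q - 1))) ≤
      Real.exp (q / (16 * μ₀)) := by
    intro e t ht
    refine batch_mgf_le h0 h1 (v := fun f => (t * (G e f * Z f)) ^ 2 / q) (fun f => ?_) ?_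
    · refine bern_exp_le_bernstein h0 ?_
      rw [abs_div, abs_mul, abs_mul, ht, abs_of_pos h0, div_le_one h0]
      have h2 : |G e f| * |Z f| ≤ μ₀ * M :=
        mul_le_mul (proj_abs_le hG hG2 hμ0.le hμ e f) (hZM f) (abs_nonneg _) hμ0.le
      calc s * (|G e f| * |Z f|) ≤ s * (μ₀ * M) := mul_le_mul_of_nonneg_left h2 hsp.le
        _ = q / 4 := by rw [hs]; field_simp
        _ ≤ q := by linarith
    · have ht2 : t ^ 2 = s ^ 2 := by rw [← sq_abs, ht]
      have h3 : ∀ f, (t * (G e f * Z f)) ^ 2 / q ≤ s ^ 2 * M ^ 2 / q * G e f ^ 2 := by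
        intro f
        have : Z f ^ 2 ≤ M ^ 2 := by
          rw [← sq_abs]; exact pow_le_pow_left₀ (abs_nonneg _) (hZM f) 2
        rw [mul_pow, mul_pow, ht2, div_mul_eq_mul_div]
        refine div_le_div_of_nonneg_right ?_ h0.le
        nlinarith [mul_le_mul_of_nonneg_left this (mul_nonneg (sq_nonneg s) (sq_nonneg (G e f)))]
      refine (Finset.sum_le_sum fun f _ => h3 f).trans ?_
      rw [← Finset.mul_sum, proj_sum_sq hG hG2]
      refine (mul_le_mul_of_nonneg_left (hμ e) (by positivity)).trans (le_of_eq ?_)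
      rw [hs]; field_simp; ring
  have hpt : ∀ e ∈ (Finset.univ : Finset (Fin n1 × Fin n2)),
      wprob (bernW (1 - q)) (fun b => M / 2 < |(Z - G *ᵥ batch q Z b) e|) ≤
        2 * Real.exp (-q / (16 * μ₀)) := by
    intro e _
    simp only [hrw]
    refine (wprob_abs_le_exp hw hsp.le (hmgf e s (abs_of_pos hsp))
      (hmgf e (-s) (by rw [abs_neg, abs_of_pos hsp]))).trans (le_of_eq ?_)
    congr 2
    rw [hs]; field_simp; ring
  have := wprob_exists_le hw Finset.univ _ hpt
  simpa using this

lemma wprob_batch_spec_le (hn : n2 ≤ n1) {q : ℝ} (h0 : 0 < q) (h1 : q ≤ 1) {M : ℝ}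
    (hM : 0 < M) {Z : Fin n1 × Fin n2 → ℝ} (hZM : ∀ e, |Z e| ≤ M) :
    wprob (bernW (1 - q)) (fun b => ¬ SpecLe (batch q Z b - Z) (16 * (M / q * √n1))) ≤
      Real.exp (-4 * n1) := by
  have hw := fun b : Fin n1 × Fin n2 → Bool =>
    bernW_nonneg (p := 1 - q) (by linarith) (by linarith) b
  refine wprob_specLe hw hn (fun b => batch q Z b - Z) (by positivity) fun x y hx hy s => ?_
  have hrw : ∀ b : Fin n1 × Fin n2 → Bool, ∑ p, (batch q Z b - Z) p * (x p.1 * y p.2) =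
      ∑ p, Z p * (x p.1 * y p.2) * ((if b p then 0 else 1) / q - 1) := fun b =>
    Finset.sum_congr rfl fun p _ => by simp only [Pi.sub_apply, batch]; ring
  simp only [hrw]
  refine batch_mgf_le h0 h1 (fun p => bern_exp_le_hoeffding h0 h1 _) ?_
  have h3 : ∀ p : Fin n1 × Fin n2, (s * (Z p * (x p.1 * y p.2)) / q) ^ 2 / 2 ≤
      (M / q) ^ 2 * s ^ 2 / 2 * (x p.1 * y p.2) ^ 2 := by
    intro p
    have : Z p ^ 2 ≤ M ^ 2 := by
      rw [← sq_abs]; exact pow_le_pow_left₀ (abs_nonneg _) (hZM p) 2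
    have h4 := mul_le_mul_of_nonneg_right this
      (show 0 ≤ s ^ 2 * (x p.1 * y p.2) ^ 2 / q ^ 2 / 2 by positivity)
    calc _ = Z p ^ 2 * (s ^ 2 * (x p.1 * y p.2) ^ 2 / q ^ 2 / 2) := by field_simp
      _ ≤ _ := h4
      _ = _ := by field_simp
  refine (Finset.sum_le_sum fun p _ => h3 p).trans ?_
  rw [← Finset.mul_sum]
  exact mul_le_of_le_one_right (by positivity) (sum_sq_prod_le_one hx hy)

/-- The certificate produced by `k` rounds of the golfing scheme, supported off `{b = true}`. -/
def GolfGood (G : Matrix (Fin n1 × Fin n2) (Fin n1 × Fin n2) ℝ) (q M : ℝ)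
    (Z : Fin n1 × Fin n2 → ℝ) (k : ℕ) (b : Fin n1 × Fin n2 → Bool) : Prop :=
  ∃ Y : Fin n1 × Fin n2 → ℝ, (∀ e, b e = true → Y e = 0) ∧
    (∀ e, |Y e| ≤ 2 * M / q * (1 - (1 / 2) ^ k)) ∧
    (∀ e, |(Z - G *ᵥ Y) e| ≤ (1 / 2) ^ k * M) ∧
    SpecLe (Y - G *ᵥ Y) (32 * (M / q * √n1) * (1 - (1 / 2) ^ k))

lemma wprob_golf_le (hn : n2 ≤ n1) (hG : Gᵀ = G) (hG2 : G * G = G) {μ₀ : ℝ} (hμ0 : 0 < μ₀)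
    (hμ : ∀ e, G e e ≤ μ₀) (hspec : ∀ f t, SpecLe f t → SpecLe (f - G *ᵥ f) t)
    {q : ℝ} (h0 : 0 < q) (h1 : q ≤ 1) (k : ℕ) :
    ∀ {M : ℝ}, 0 < M → ∀ {Z : Fin n1 × Fin n2 → ℝ}, G *ᵥ Z = Z → (∀ e, |Z e| ≤ M) →
    wprob (bernW ((1 - q) ^ k)) (fun b => ¬ GolfGood G q M Z k b) ≤
      k * ((n1 * n2 : ℝ) * (2 * Real.exp (-q / (16 * μ₀))) + Real.exp (-4 * n1)) := by
  set ε : ℝ := (n1 * n2 : ℝ) * (2 * Real.exp (-q / (16 * μ₀))) + Real.exp (-4 * n1) with hε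
  have hε0 : 0 ≤ ε := by positivity
  have hp0 : (0 : ℝ) ≤ 1 - q := by linarith
  have hw := fun b : Fin n1 × Fin n2 → Bool => bernW_nonneg hp0 (by linarith) b
  induction k with
  | zero =>
    intro M hM Z hZ hZM
    have : ∀ b, GolfGood G q M Z 0 b := fun b =>
      ⟨0, by simp, by simp, by simpa using hZM, fun x y _ _ => by simp⟩
    simp only [this, not_true]
    simp [wprob, wexp]
  | succ k ih =>
    intro M hM Z hZ hZM
    classical
    set bad : (Fin n1 × Fin n2 → Bool) → Prop := fun b =>
      (∃ e, M / 2 < |(Z - G *ᵥ batch q Z b) e|) ∨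
        ¬ SpecLe (batch q Z b - Z) (16 * (M / q * √n1)) with hbad
    have hbadp : wprob (bernW (1 - q)) bad ≤ ε :=
      (wprob_or_le hw _ _).trans (add_le_add (wprob_batch_sup_le hG hG2 hμ0 hμ h0 h1 hM hZ hZM)
        (wprob_batch_spec_le hn h0 h1 hM hZM))
    have hwk := fun b : Fin n1 × Fin n2 → Bool =>
      bernW_nonneg (pow_nonneg hp0 k) (pow_le_one₀ hp0 (by linarith)) b
    have hinner : ∀ b, wprob (bernW ((1 - q) ^ k))
        (fun b' => ¬ GolfGood G q M Z (k + 1) fun e => b e && b' e) ≤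
        (if bad b then 1 else 0) + k * ε := by
      intro b
      by_cases hb : bad b
      · simp only [hb, if_true]
        refine le_add_of_le_of_nonneg ?_ (by positivity)
        refine (wprob_mono hwk (F := fun _ => True) fun _ _ => trivial).trans (le_of_eq ?_)
        simp [wprob, wexp_bernW_const]
      · simp only [hb, if_false, zero_add]
        rw [hbad] at hb
        push Not at hb
        obtain ⟨hb1, hb2⟩ := hb
        set W := batch q Z b with hW
        have hZ' : G *ᵥ (Z - G *ᵥ W) = Z - G *ᵥ W := by
          rw [mulVec_sub, mulVec_mulVec, hG2, hZ]
        refine (wprob_mono hwk fun b' hb' => ?_).trans (ih (half_pos hM) hZ' hb1)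
        contrapose! hb'
        obtain ⟨Y, hY1, hY2, hY3, hY4⟩ := hb'
        refine ⟨W + Y, ?_, ?_, ?_, ?_⟩
        · intro e he
          rw [Bool.and_eq_true] at he
          simp [hW, batch, he.1, hY1 e he.2]
        · intro e
          have hWe : |W e| ≤ M / q := by
            rw [hW, batch, abs_mul, div_eq_mul_inv]
            refine mul_le_mul (hZM e) ?_ (abs_nonneg _) hM.le
            split_ifs
            · simp [h0.le]
            · rw [one_mul, abs_of_pos (inv_pos.2 h0)]
          calc |(W + Y) e| ≤ |W e| + |Y e| := abs_add_le _ _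
            _ ≤ M / q + 2 * (M / 2) / q * (1 - (1 / 2) ^ k) := add_le_add hWe (hY2 e)
            _ = _ := by rw [pow_succ]; ring
        · intro e
          rw [mulVec_add, ← sub_sub]
          refine (hY3 e).trans (le_of_eq ?_)
          rw [pow_succ]; ring
        · have h5 : W - G *ᵥ W = (W - Z) - G *ᵥ (W - Z) := by
            rw [mulVec_sub, hZ]; abel
          have h6 : W + Y - G *ᵥ (W + Y) = ((W - Z) - G *ᵥ (W - Z)) + (Y - G *ᵥ Y) := by
            rw [← h5, mulVec_add]; abel
          rw [h6]
          refine ((hspec _ _ hb2).add hY4).mono (le_of_eq ?_)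
          rw [pow_succ]; ring
    rw [pow_succ', wprob, wexp_bernW_and]
    refine (wexp_mono hw hinner).trans ?_
    rw [wexp_add, wexp_bernW_const]
    have : wexp (bernW (1 - q)) (fun b => if bad b then (1 : ℝ) else 0) ≤ ε := by
      refine le_of_eq_of_le ?_ hbadp
      unfold wprob
      congr 1
      funext b
      by_cases hb : bad b <;> simp only [hb, if_true, if_false]
    push_cast
    linarith

end Golfing

/-! ### The least-squares certificate for the random signs -/

section EuclideanNorm

variable {ι : Type*} [Fintype ι]

/-- Euclidean norm of a finitely indexed vector. -/
noncomputable def l2 (v : ι → ℝ) : ℝ := √(∑ e, v e ^ 2)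

lemma l2_eq_norm (v : ι → ℝ) : l2 v = ‖(WithLp.toLp 2 v : EuclideanSpace ℝ ι)‖ := by
  simp [l2, EuclideanSpace.norm_eq]

lemma l2_nonneg (v : ι → ℝ) : 0 ≤ l2 v := Real.sqrt_nonneg _

lemma l2_sq (v : ι → ℝ) : l2 v ^ 2 = ∑ e, v e ^ 2 :=
  Real.sq_sqrt (Finset.sum_nonneg fun _ _ => sq_nonneg _)

lemma l2_add_le (v w : ι → ℝ) : l2 (v + w) ≤ l2 v + l2 w := by
  simp only [l2_eq_norm, WithLp.toLp_add]
  exact norm_add_le _ _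

lemma l2_neg (v : ι → ℝ) : l2 (-v) = l2 v := by simp [l2]

lemma l2_sub_le (v w : ι → ℝ) : l2 (v - w) ≤ l2 v + l2 w := by
  rw [sub_eq_add_neg, ← l2_neg w]; exact l2_add_le _ _

lemma dotProduct_le_l2 (v w : ι → ℝ) : v ⬝ᵥ w ≤ l2 v * l2 w := by
  rw [l2, l2, ← Real.sqrt_mul (Finset.sum_nonneg fun _ _ => sq_nonneg _)]
  exact Real.le_sqrt_of_sq_le (Finset.sum_mul_sq_le_sq_mul_sq _ _ _)

lemma l2_le_l2 {v w : ι → ℝ} (h : ∀ e, |v e| ≤ |w e|) : l2 v ≤ l2 w :=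
  Real.sqrt_le_sqrt (Finset.sum_le_sum fun e _ => sq_le_sq.2 (h e))

lemma eq_zero_of_l2_eq_zero {v : ι → ℝ} (h : l2 v = 0) : v = 0 := by
  have h1 := l2_sq v
  rw [h, zero_pow two_ne_zero] at h1
  funext e
  exact pow_eq_zero_iff two_ne_zero |>.1
    ((Finset.sum_eq_zero_iff_of_nonneg fun _ _ => sq_nonneg _).1 h1.symm e (Finset.mem_univ e))

end EuclideanNorm

section Signs

variable {ι : Type*} [Fintype ι] [DecidableEq ι]

/-- The linear map producing the correction of a sign vector off its support. -/
lemma exists_dual_correction {G : Matrix ι ι ℝ} (hG : Gᵀ = G) (hG2 : G * G = G) {b : ι → Bool}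
    {σ : ℝ} (hσ0 : 0 ≤ σ) (hσ : σ ≤ 1 / 2)
    (hb : ∀ f : ι → ℝ, ∑ e, (if b e then (G *ᵥ f) e ^ 2 else 0) ≤ σ ^ 2 * ∑ e, f e ^ 2) :
    ∃ C : Matrix ι ι ℝ, (∀ s : ι → ℝ, (∀ e, b e = false → s e = 0) →
        (∀ e, b e = true → (C *ᵥ s) e = 0) ∧ G *ᵥ (s + C *ᵥ s) = 0) ∧
      (∀ v, l2 (Cᵀ *ᵥ v) ≤ 2 * σ * l2 v) ∧ ∀ e, ∑ f, C e f ^ 2 ≤ 4 * G e e := by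
  set B : Matrix ι ι ℝ := diagonal fun e => if b e then 1 else 0 with hB
  have hBv : ∀ v e, (B *ᵥ v) e = if b e then v e else 0 := fun v e => by
    rw [hB, mulVec_diagonal]; split_ifs <;> simp
  have hBT : Bᵀ = B := diagonal_transpose _
  have hBB : B * B = B := by
    rw [hB, diagonal_mul_diagonal]; congr 1; funext e; split_ifs <;> simp
  have hBl : ∀ v, l2 (B *ᵥ v) ≤ l2 v := fun v => l2_le_l2 fun e => by
    rw [hBv]; split_ifs <;> simp
  have hB'l : ∀ v, l2 ((1 - B) *ᵥ v) ≤ l2 v := fun v => l2_le_l2 fun e => by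
    rw [sub_mulVec, one_mulVec, Pi.sub_apply, hBv]; split_ifs <;> simp
  have hBG : ∀ f, l2 (B *ᵥ (G *ᵥ f)) ≤ σ * l2 f := fun f => by
    refine abs_le_of_sq_le_sq' ?_ (mul_nonneg hσ0 (l2_nonneg f)) |>.2
    rw [mul_pow, l2_sq, l2_sq]
    refine le_of_eq_of_le (Finset.sum_congr rfl fun e _ => ?_) (hb f)
    rw [hBv]; split_ifs <;> simp
  have hA : ∀ v, l2 ((B * G * B) *ᵥ v) ≤ 1 / 2 * l2 v := fun v => by
    rw [← mulVec_mulVec, ← mulVec_mulVec]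
    refine (hBG _).trans ?_
    exact mul_le_mul hσ (hBl v) (l2_nonneg _) (by norm_num)
  have hdet : IsUnit (1 - B * G * B).det := by
    rw [isUnit_iff_ne_zero]
    intro h
    obtain ⟨v, hv, hv2⟩ := Matrix.exists_mulVec_eq_zero_iff.2 h
    rw [sub_mulVec, one_mulVec, sub_eq_zero] at hv2
    have := hA v
    rw [← hv2] at this
    exact hv (eq_zero_of_l2_eq_zero (le_antisymm (by linarith) (l2_nonneg v)))
  set R : Matrix ι ι ℝ := (1 - B * G * B)⁻¹ with hR
  have hR1 : (1 - B * G * B) * R = 1 := Matrix.mul_nonsing_inv _ hdet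
  have hRT : Rᵀ = R := by
    rw [hR, transpose_nonsing_inv]
    simp [transpose_mul, hBT, hG, Matrix.mul_assoc]
  have hReq : ∀ v, R *ᵥ v = v + (B * G * B) *ᵥ (R *ᵥ v) := fun v => by
    have := congrArg (· *ᵥ v) hR1
    simp only [one_mulVec] at this
    rw [← mulVec_mulVec, sub_mulVec, one_mulVec, sub_eq_iff_eq_add] at this
    exact this
  have hRl : ∀ v, l2 (R *ᵥ v) ≤ 2 * l2 v := fun v => by
    have h1 := l2_add_le v ((B * G * B) *ᵥ (R *ᵥ v))
    rw [← hReq] at h1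
    linarith [hA (R *ᵥ v)]
  have hCT : ∀ v, (-((1 - B) * G * B * R))ᵀ *ᵥ v =
      -(R *ᵥ (B *ᵥ (G *ᵥ ((1 - B) *ᵥ v)))) := fun v => by
    simp only [transpose_neg, transpose_mul, hRT, hBT, hG, transpose_sub, transpose_one,
      neg_mulVec, mulVec_mulVec, Matrix.mul_assoc]
  refine ⟨-((1 - B) * G * B * R), fun s hs => ?_, fun v => ?_, fun e => ?_⟩
  · have hBs : B *ᵥ s = s := funext fun e => by
      rw [hBv]
      by_cases he : b e = true
      · simp [he]
      · rw [if_neg he, hs e (by simpa using he)]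
    set g := R *ᵥ s with hg
    have hg1 : g = s + (B * G * B) *ᵥ g := hReq s
    have hBg : B *ᵥ g = g := by
      rw [hg1, mulVec_add, hBs, mulVec_mulVec, ← Matrix.mul_assoc, ← Matrix.mul_assoc, hBB]
    have hC : (-((1 - B) * G * B * R)) *ᵥ s = -((1 - B) *ᵥ (G *ᵥ g)) := by
      rw [neg_mulVec, ← mulVec_mulVec, ← mulVec_mulVec, hBg, ← mulVec_mulVec]
    refine ⟨fun e he => ?_, ?_⟩
    · rw [hC, Pi.neg_apply, sub_mulVec, one_mulVec, Pi.sub_apply, hBv, if_pos he, sub_self,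
        neg_zero]
    · have hg2 : s = g - B *ᵥ (G *ᵥ g) := by
        rw [eq_sub_iff_add_eq]
        conv_rhs => rw [hg1, ← mulVec_mulVec, ← mulVec_mulVec, hBg]
      have : s + (-((1 - B) * G * B * R)) *ᵥ s = g - G *ᵥ g := by
        rw [hC, sub_mulVec, one_mulVec, hg2]
        abel
      rw [this, mulVec_sub, mulVec_mulVec g, hG2, sub_self]
  · rw [hCT, l2_neg]
    refine (hRl _).trans ?_
    rw [mul_assoc]
    refine mul_le_mul_of_nonneg_left ((hBG _).trans ?_) (by norm_num)
    exact mul_le_mul_of_nonneg_left (hB'l v) hσ0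
  · have h1 : ∀ f, (-((1 - B) * G * B * R)) e f =
        ((-((1 - B) * G * B * R))ᵀ *ᵥ (Pi.single e 1)) f := fun f => by
      rw [mulVec_single_one]; rfl
    simp only [h1]
    rw [← l2_sq, hCT, l2_neg]
    have hGe : l2 (G *ᵥ ((1 - B) *ᵥ Pi.single e 1)) ^ 2 ≤ G e e := by
      by_cases he : b e = true
      · have : (1 - B) *ᵥ (Pi.single e 1 : ι → ℝ) = 0 := funext fun f => by
          rw [sub_mulVec, one_mulVec, Pi.sub_apply, hBv]
          by_cases hf : f = e
          · subst hf; simp [he]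
          · simp [Pi.single_eq_of_ne hf]
        rw [this, mulVec_zero, ← proj_sum_sq hG hG2]
        simp only [l2_sq, Pi.zero_apply]
        exact Finset.sum_le_sum fun f _ => by simpa using sq_nonneg _
      · have : (1 - B) *ᵥ (Pi.single e 1 : ι → ℝ) = Pi.single e 1 := funext fun f => by
          rw [sub_mulVec, one_mulVec, Pi.sub_apply, hBv]
          by_cases hf : f = e
          · subst hf; simp [he]
          · simp [Pi.single_eq_of_ne hf]
        rw [this, l2_sq, ← proj_sum_sq hG hG2]
        exact (Finset.sum_congr rfl fun f _ => by simp [proj_apply_comm hG f e]).le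
    have h2 := (hRl _).trans
      (mul_le_mul_of_nonneg_left (hBl (G *ᵥ ((1 - B) *ᵥ Pi.single e 1))) zero_le_two)
    have h3 := pow_le_pow_left₀ (l2_nonneg _) h2 2
    rw [mul_pow] at h3
    linarith

/-- The value `±1` of a sign bit. -/
def sgn (x : Bool) : ℝ := if x then 1 else -1

/-- The random sign vector with support `b` and signs `ε`. -/
def signVec (b ε : ι → Bool) (e : ι) : ℝ := if b e then sgn (ε e) else 0

lemma wexp_sign (s : ℝ) (c : ι → ℝ) :
    wexp (bernW (1 / 2)) (fun ε => Real.exp (s * ∑ e, c e * sgn (ε e))) =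
      ∏ e, Real.cosh (s * c e) := by
  rw [wexp_bernW_exp (1 / 2) s fun e x => c e * sgn x]
  refine Finset.prod_congr rfl fun e _ => ?_
  simp only [sgn, if_true, Bool.false_eq_true, if_false, Real.cosh_eq, mul_one, mul_neg]
  ring

lemma wexp_sign_le {s B : ℝ} {c : ι → ℝ} (h : ∑ e, c e ^ 2 ≤ B) :
    wexp (bernW (1 / 2)) (fun ε => Real.exp (s * ∑ e, c e * sgn (ε e))) ≤
      Real.exp (B * s ^ 2 / 2) := by
  rw [wexp_sign]
  refine (Finset.prod_le_prod (fun e _ => (Real.cosh_pos _).le)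
    fun e _ => Real.cosh_le_exp_half_sq _).trans ?_
  rw [← Real.exp_sum, Real.exp_le_exp]
  calc ∑ e, (s * c e) ^ 2 / 2 = (∑ e, c e ^ 2) * s ^ 2 / 2 := by
        rw [Finset.sum_mul, Finset.sum_div]; exact Finset.sum_congr rfl fun e _ => by ring
    _ ≤ _ := by gcongr

end Signs

section SignSpec

lemma mulVec_signVec_dot {ι : Type*} [Fintype ι] (C : Matrix ι ι ℝ) (b ε : ι → Bool) (v : ι → ℝ) :
    ∑ e, (C *ᵥ signVec b ε) e * v e =
      ∑ e, (if b e then (Cᵀ *ᵥ v) e else 0) * sgn (ε e) := by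
  change (C *ᵥ signVec b ε) ⬝ᵥ v = _
  rw [dotProduct_comm, dotProduct_mulVec, ← mulVec_transpose]
  refine Finset.sum_congr rfl fun e _ => ?_
  rw [signVec]; split_ifs <;> simp

lemma sum_ite_sq_le {ι : Type*} [Fintype ι] (b : ι → Bool) (v : ι → ℝ) :
    ∑ e, (if b e then v e else 0) ^ 2 ≤ ∑ e, v e ^ 2 :=
  Finset.sum_le_sum fun e _ => by split_ifs <;> simp [sq_nonneg]

variable {n1 n2 : ℕ} {G : Matrix (Fin n1 × Fin n2) (Fin n1 × Fin n2) ℝ}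

/-- There is a small correction `h` of the sign vector `signVec b ε`, supported off `{b = true}`,
which makes it orthogonal to the range of `G`. -/
def SignGood (G : Matrix (Fin n1 × Fin n2) (Fin n1 × Fin n2) ℝ) (σ : ℝ)
    (b ε : Fin n1 × Fin n2 → Bool) : Prop :=
  ∃ h : Fin n1 × Fin n2 → ℝ, (∀ e, b e = true → h e = 0) ∧ (∀ e, |h e| ≤ 1 / 4) ∧
    SpecLe h (16 * (2 * σ * √n1)) ∧ G *ᵥ (signVec b ε + h) = 0

lemma wprob_signGood_le (hn : n2 ≤ n1) (hG : Gᵀ = G) (hG2 : G * G = G) {μ₀ : ℝ} (hμ0 : 0 < μ₀)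
    (hμ : ∀ e, G e e ≤ μ₀) {b : Fin n1 × Fin n2 → Bool} {σ : ℝ} (hσ0 : 0 < σ) (hσ : σ ≤ 1 / 2)
    (hb : ∀ f : Fin n1 × Fin n2 → ℝ,
      ∑ e, (if b e then (G *ᵥ f) e ^ 2 else 0) ≤ σ ^ 2 * ∑ e, f e ^ 2) :
    wprob (bernW (1 / 2)) (fun ε => ¬ SignGood G σ b ε) ≤
      (n1 * n2 : ℝ) * (2 * Real.exp (-1 / (128 * μ₀))) + Real.exp (-4 * n1) := by
  obtain ⟨C, hC1, hC2, hC3⟩ := exists_dual_correction hG hG2 hσ0.le hσ hb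
  have hw := fun ε : Fin n1 × Fin n2 → Bool =>
    bernW_nonneg (p := 1 / 2) (by norm_num) (by norm_num) ε
  have hspec : wprob (bernW (1 / 2))
      (fun ε => ¬ SpecLe (C *ᵥ signVec b ε) (16 * (2 * σ * √n1))) ≤ Real.exp (-4 * n1) := by
    refine wprob_specLe hw hn (fun ε => C *ᵥ signVec b ε) (by positivity) fun x y hx hy s => ?_
    simp only [mulVec_signVec_dot C b _ fun p => x p.1 * y p.2]
    refine wexp_sign_le ((sum_ite_sq_le _ _).trans ?_)
    rw [← l2_sq]
    refine pow_le_pow_left₀ (l2_nonneg _) ((hC2 _).trans ?_) 2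
    refine mul_le_of_le_one_right (by positivity) ?_
    exact Real.sqrt_le_one.2 (sum_sq_prod_le_one hx hy)
  have hpt : ∀ e ∈ (Finset.univ : Finset (Fin n1 × Fin n2)),
      wprob (bernW (1 / 2)) (fun ε => 1 / 4 < |(C *ᵥ signVec b ε) e|) ≤
        2 * Real.exp (-1 / (128 * μ₀)) := by
    intro e _
    have hrw : ∀ ε, (C *ᵥ signVec b ε) e =
        ∑ f, (if b f then C e f else 0) * sgn (ε f) := fun ε =>
      Finset.sum_congr rfl fun f _ => by rw [signVec]; split_ifs <;> simp
    have hB : ∑ f, (if b f then C e f else 0) ^ 2 ≤ 4 * μ₀ :=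
      (sum_ite_sq_le b (C e)).trans ((hC3 e).trans (by linarith [hμ e]))
    simp only [hrw]
    have h1 := wexp_sign_le (s := 1 / (16 * μ₀)) hB
    have h2 := wexp_sign_le (s := -(1 / (16 * μ₀))) hB
    rw [neg_sq] at h2
    refine (wprob_abs_le_exp hw (by positivity) h1 h2).trans (le_of_eq ?_)
    congr 2
    field_simp
    ring
  have hent := wprob_exists_le hw Finset.univ _ hpt
  refine (wprob_mono hw fun ε hε => ?_).trans ((wprob_or_le hw _ _).trans
    (add_le_add (hent.trans (le_of_eq (by simp))) hspec))
  by_contra hcon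
  push Not at hcon
  obtain ⟨h1, h2⟩ := hC1 (signVec b ε) fun e he => by simp [signVec, he]
  exact hε ⟨C *ᵥ signVec b ε, h1, fun e => hcon.1 e (Finset.mem_univ e), hcon.2, h2⟩

lemma wprob_signVec_spec_le (hn : n2 ≤ n1) {ρ κ : ℝ} (hκ : 0 < κ) (h0 : 0 ≤ ρ) (h1 : ρ ≤ 1)
    (hρ : ∀ t : ℝ, 1 - ρ + ρ * Real.cosh t ≤ Real.exp (κ ^ 2 * t ^ 2 / 2)) :
    wprob (fun x : (Fin n1 × Fin n2 → Bool) × (Fin n1 × Fin n2 → Bool) =>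
        bernW ρ x.1 * bernW (1 / 2) x.2)
      (fun x => ¬ SpecLe (signVec x.1 x.2) (16 * (κ * √n1))) ≤ Real.exp (-4 * n1) := by
  have hw : ∀ x : (Fin n1 × Fin n2 → Bool) × (Fin n1 × Fin n2 → Bool),
      0 ≤ bernW ρ x.1 * bernW (1 / 2) x.2 := fun x =>
    mul_nonneg (bernW_nonneg h0 h1 _) (bernW_nonneg (by norm_num) (by norm_num) _)
  refine wprob_specLe hw hn (fun x => signVec x.1 x.2) hκ fun x y hx hy s => ?_
  rw [wexp_prod (w := bernW ρ)]
  have hrw : ∀ b ε : Fin n1 × Fin n2 → Bool, ∑ p, signVec b ε p * (x p.1 * y p.2) =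
      ∑ p, (if b p then x p.1 * y p.2 else 0) * sgn (ε p) := fun b ε =>
    Finset.sum_congr rfl fun p _ => by rw [signVec]; split_ifs <;> ring
  simp only [hrw, wexp_sign]
  rw [wexp_bernW_prod ρ fun (p : Fin n1 × Fin n2) (z : Bool) =>
     Real.cosh (s * if z then x p.1 * y p.2 else 0)]
  simp only [if_true, Bool.false_eq_true, if_false, mul_zero, Real.cosh_zero, mul_one]
  refine (Finset.prod_le_prod (fun p _ => ?_) fun p _ =>
    (add_comm _ _).trans_le (hρ (s * (x p.1 * y p.2)))).trans ?_
  · have := Real.cosh_pos (s * (x p.1 * y p.2))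
    have := mul_nonneg h0 this.le
    linarith
  · rw [← Real.exp_sum, Real.exp_le_exp]
    calc ∑ p : Fin n1 × Fin n2, κ ^ 2 * (s * (x p.1 * y p.2)) ^ 2 / 2 =
        κ ^ 2 * s ^ 2 / 2 * ∑ p : Fin n1 × Fin n2, (x p.1 * y p.2) ^ 2 := by
          rw [Finset.mul_sum]; exact Finset.sum_congr rfl fun p _ => by ring
      _ ≤ _ := mul_le_of_le_one_right (by positivity) (sum_sq_prod_le_one hx hy)

end SignSpec

/-! ### The projection onto the tangent space -/

section Tangent

lemma l2_proj_sq {ι : Type*} [Fintype ι] {P : Matrix ι ι ℝ} (hP : Pᵀ = P) (hP2 : P * P = P)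
    (x : ι → ℝ) : l2 (P *ᵥ x) ^ 2 = x ⬝ᵥ (P *ᵥ x) := by
  have : l2 (P *ᵥ x) ^ 2 = (P *ᵥ x) ⬝ᵥ (P *ᵥ x) := by
    rw [l2_sq]; exact Finset.sum_congr rfl fun e _ => sq _
  rw [this, dotProduct_mulVec, ← mulVec_transpose, hP, mulVec_mulVec, hP2, dotProduct_comm]

lemma l2_proj_le {ι : Type*} [Fintype ι] {P : Matrix ι ι ℝ} (hP : Pᵀ = P) (hP2 : P * P = P)
    (x : ι → ℝ) : l2 (P *ᵥ x) ≤ l2 x := by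
  have h1 := l2_proj_sq hP hP2 x
  have h2 := dotProduct_le_l2 x (P *ᵥ x)
  have h3 := l2_nonneg (P *ᵥ x)
  have h4 := l2_nonneg x
  by_contra hcon
  push Not at hcon
  nlinarith

variable {n1 n2 r : ℕ}

/-- The orthogonal projection onto the complement of the column space of `U`. -/
noncomputable def coproj {n : ℕ} (U : Matrix (Fin n) (Fin r) ℝ) : Matrix (Fin n) (Fin n) ℝ :=
  1 - U * Uᵀ

lemma coproj_transpose {n : ℕ} (U : Matrix (Fin n) (Fin r) ℝ) : (coproj U)ᵀ = coproj U := by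
  simp [coproj, transpose_mul]

lemma coproj_mul_self {n : ℕ} {U : Matrix (Fin n) (Fin r) ℝ} (hU : Uᵀ * U = 1) :
    coproj U * U = 0 := by
  rw [coproj, Matrix.sub_mul, Matrix.mul_assoc, hU, Matrix.one_mul, Matrix.mul_one, sub_self]

lemma coproj_idem {n : ℕ} {U : Matrix (Fin n) (Fin r) ℝ} (hU : Uᵀ * U = 1) :
    coproj U * coproj U = coproj U := by
  conv_lhs => rw [coproj]
  rw [← coproj, coproj, Matrix.mul_sub, ← coproj, ← Matrix.mul_assoc, coproj_mul_self hU,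
    Matrix.mul_one, Matrix.zero_mul, sub_zero]

lemma l2_coproj_sq {n : ℕ} {U : Matrix (Fin n) (Fin r) ℝ} (hU : Uᵀ * U = 1) (x : Fin n → ℝ) :
    l2 (Uᵀ *ᵥ x) ^ 2 + l2 (coproj U *ᵥ x) ^ 2 = l2 x ^ 2 := by
  rw [l2_proj_sq (coproj_transpose U) (coproj_idem hU), coproj, sub_mulVec, one_mulVec,
    dotProduct_sub, ← mulVec_mulVec, dotProduct_mulVec, ← mulVec_transpose]
  have h1 : ∀ {m : ℕ} (v : Fin m → ℝ), l2 v ^ 2 = v ⬝ᵥ v := fun v => by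
    rw [l2_sq]; exact Finset.sum_congr rfl fun e _ => sq _
  rw [h1, h1]; ring

open scoped Kronecker in
/-- The orthogonal projection onto the tangent space `{U Qᵀ + R Vᵀ}`, acting on matrices seen as
vectors. -/
noncomputable def projT (U : Matrix (Fin n1) (Fin r) ℝ) (V : Matrix (Fin n2) (Fin r) ℝ) :
    Matrix (Fin n1 × Fin n2) (Fin n1 × Fin n2) ℝ :=
  1 - coproj U ⊗ₖ coproj V

variable {U : Matrix (Fin n1) (Fin r) ℝ} {V : Matrix (Fin n2) (Fin r) ℝ}

lemma projT_transpose : (projT U V)ᵀ = projT U V := by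
  rw [projT, transpose_sub, transpose_one, ← kroneckerMap_transpose, coproj_transpose,
    coproj_transpose]

lemma projT_idem (hU : Uᵀ * U = 1) (hV : Vᵀ * V = 1) : projT U V * projT U V = projT U V := by
  rw [projT, Matrix.sub_mul, Matrix.mul_sub, Matrix.mul_sub, ← mul_kronecker_mul, coproj_idem hU,
    coproj_idem hV]
  simp

lemma projT_diag_le (e : Fin n1 × Fin n2) :
    projT U V e e ≤ ∑ k, U e.1 k ^ 2 + ∑ k, V e.2 k ^ 2 := by
  have h : ∀ {n : ℕ} (W : Matrix (Fin n) (Fin r) ℝ) i, coproj W i i = 1 - ∑ k, W i k ^ 2 :=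
    fun W i => by simp [coproj, Matrix.mul_apply, sq]
  have h1 : projT U V e e = 1 - coproj U e.1 e.1 * coproj V e.2 e.2 := by
    simp [projT]
  rw [h1, h, h]
  have h2 : 0 ≤ ∑ k, U e.1 k ^ 2 := Finset.sum_nonneg fun _ _ => sq_nonneg _
  have h3 : 0 ≤ ∑ k, V e.2 k ^ 2 := Finset.sum_nonneg fun _ _ => sq_nonneg _
  nlinarith [mul_nonneg h2 h3]

lemma coprojT_pairing (f : Fin n1 × Fin n2 → ℝ) (x : Fin n1 → ℝ) (y : Fin n2 → ℝ) :
    ∑ p, (f - projT U V *ᵥ f) p * (x p.1 * y p.2) =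
      ∑ p, f p * ((coproj U *ᵥ x) p.1 * (coproj V *ᵥ y) p.2) := by
  have h1 : f - projT U V *ᵥ f = (1 - projT U V) *ᵥ f := by rw [sub_mulVec, one_mulVec]
  have h2 : (1 - projT U V)ᵀ = 1 - projT U V := by
    rw [transpose_sub, transpose_one, projT_transpose]
  change (f - projT U V *ᵥ f) ⬝ᵥ (fun p => x p.1 * y p.2) = _
  rw [h1, dotProduct_comm, dotProduct_mulVec, ← mulVec_transpose, h2, dotProduct_comm]
  refine Finset.sum_congr rfl fun p _ => ?_
  congr 1
  rw [projT, sub_sub_cancel]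
  simp only [mulVec, dotProduct, Fintype.sum_prod_type, kroneckerMap_apply, Finset.sum_mul_sum]
  exact Finset.sum_congr rfl fun i _ => Finset.sum_congr rfl fun j _ => by ring

lemma sum_sq_coproj_le {n : ℕ} {U : Matrix (Fin n) (Fin r) ℝ} (hU : Uᵀ * U = 1) {x : Fin n → ℝ}
    (hx : ∑ i, x i ^ 2 ≤ 1) : ∑ i, (coproj U *ᵥ x) i ^ 2 ≤ 1 := by
  rw [← l2_sq] at hx ⊢
  exact (pow_le_pow_left₀ (l2_nonneg _)
    (l2_proj_le (coproj_transpose U) (coproj_idem hU) x) 2).trans hx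

lemma SpecLe.coprojT (hU : Uᵀ * U = 1) (hV : Vᵀ * V = 1) {f : Fin n1 × Fin n2 → ℝ} {t : ℝ}
    (hf : SpecLe f t) : SpecLe (f - projT U V *ᵥ f) t := fun x y hx hy => by
  rw [coprojT_pairing]
  exact hf _ _ (sum_sq_coproj_le hU hx) (sum_sq_coproj_le hV hy)

/-- The entries of `U Vᵀ`, as a vector. -/
def uvVec (U : Matrix (Fin n1) (Fin r) ℝ) (V : Matrix (Fin n2) (Fin r) ℝ) (p : Fin n1 × Fin n2) :
    ℝ := ∑ k, U p.1 k * V p.2 k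

lemma sum_uvVec_mul (x : Fin n1 → ℝ) (y : Fin n2 → ℝ) :
    ∑ p, uvVec U V p * (x p.1 * y p.2) = (Uᵀ *ᵥ x) ⬝ᵥ (Vᵀ *ᵥ y) := by
  simp only [uvVec, mulVec, dotProduct, transpose_apply, Finset.sum_mul, Fintype.sum_prod_type]
  rw [Finset.sum_congr rfl fun i _ => Finset.sum_comm, Finset.sum_comm]
  refine Finset.sum_congr rfl fun k _ => Finset.sum_congr rfl fun i _ => ?_
  rw [Finset.mul_sum]
  exact Finset.sum_congr rfl fun j _ => by ring

lemma eq_of_forall_pairing {f g : Fin n1 × Fin n2 → ℝ}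
    (h : ∀ (x : Fin n1 → ℝ) (y : Fin n2 → ℝ),
      ∑ p, f p * (x p.1 * y p.2) = ∑ p, g p * (x p.1 * y p.2)) : f = g := by
  funext p
  have := h (Pi.single p.1 1) (Pi.single p.2 1)
  have h2 : ∀ f : Fin n1 × Fin n2 → ℝ, ∑ q : Fin n1 × Fin n2, f q *
      ((Pi.single p.1 1 : Fin n1 → ℝ) q.1 * (Pi.single p.2 1 : Fin n2 → ℝ) q.2) = f p := by
    intro f
    rw [Finset.sum_eq_single p]
    · simp
    · intro q _ hq
      by_cases h1 : q.1 = p.1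
      · have h2 : q.2 ≠ p.2 := fun h2 => hq (Prod.ext h1 h2)
        simp [Pi.single_eq_of_ne h2]
      · simp [Pi.single_eq_of_ne h1]
    · simp
  rwa [h2, h2] at this

lemma projT_uvVec (hU : Uᵀ * U = 1) : projT U V *ᵥ uvVec U V = uvVec U V := by
  have : uvVec U V - projT U V *ᵥ uvVec U V = 0 := eq_of_forall_pairing fun x y => by
    rw [coprojT_pairing, sum_uvVec_mul]
    have : Uᵀ *ᵥ (coproj U *ᵥ x) = 0 := by
      have h := congrArg transpose (coproj_mul_self hU)
      rw [transpose_mul, coproj_transpose, transpose_zero] at h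
      rw [mulVec_mulVec, h, zero_mulVec]
    simp [this]
  exact (sub_eq_zero.1 this).symm

lemma SpecLe.pairing_le {f : Fin n1 × Fin n2 → ℝ} {t : ℝ} (hf : SpecLe f t) (x : Fin n1 → ℝ)
    (y : Fin n2 → ℝ) : ∑ p, f p * (x p.1 * y p.2) ≤ t * (l2 x * l2 y) := by
  rcases eq_or_ne (l2 x) 0 with hx | hx
  · rw [hx, eq_zero_of_l2_eq_zero hx]; simp
  rcases eq_or_ne (l2 y) 0 with hy | hy
  · rw [hy, eq_zero_of_l2_eq_zero hy]; simp
  have hn : ∀ {n : ℕ} (z : Fin n → ℝ), l2 z ≠ 0 → ∑ i, (z i / l2 z) ^ 2 ≤ 1 := fun z hz => by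
    simp only [div_pow, ← Finset.sum_div, ← l2_sq]
    exact (div_self (pow_ne_zero 2 hz)).le
  have h := hf (fun i => x i / l2 x) (fun j => y j / l2 y) (hn x hx) (hn y hy)
  have hpos : 0 < l2 x * l2 y :=
    mul_pos (lt_of_le_of_ne (l2_nonneg x) hx.symm) (lt_of_le_of_ne (l2_nonneg y) hy.symm)
  rw [← div_le_iff₀ hpos]
  refine le_of_eq_of_le ?_ h
  rw [Finset.sum_div]
  exact Finset.sum_congr rfl fun p _ => by field_simp

/-- A subgradient certificate: `U Vᵀ + W` has spectral norm at most one when `W` is orthogonal to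
the tangent space with spectral norm at most one. -/
lemma specLe_uvVec_add (hU : Uᵀ * U = 1) (hV : Vᵀ * V = 1) {w : Fin n1 × Fin n2 → ℝ}
    (hw : SpecLe w 1) (hGw : projT U V *ᵥ w = 0) : SpecLe (uvVec U V + w) 1 := fun x y hx hy => by
  simp only [Pi.add_apply, add_mul, Finset.sum_add_distrib]
  have h1 := coprojT_pairing (U := U) (V := V) w x y
  rw [hGw, sub_zero] at h1
  rw [h1, sum_uvVec_mul]
  have h2 := hw.pairing_le (coproj U *ᵥ x) (coproj V *ᵥ y)
  have h3 := dotProduct_le_l2 (Uᵀ *ᵥ x) (Vᵀ *ᵥ y)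
  have h4 := l2_coproj_sq hU x
  have h5 := l2_coproj_sq hV y
  rw [← l2_sq] at hx hy
  nlinarith [sq_nonneg (l2 (Uᵀ *ᵥ x) - l2 (Vᵀ *ᵥ y)),
    sq_nonneg (l2 (coproj U *ᵥ x) - l2 (coproj V *ᵥ y))]

end Tangent

/-! ### Spectral and nuclear norms -/

section Nuclear

variable {n1 n2 r : ℕ}

/-- The entries of a matrix, as a vector. -/
def toVec (A : Matrix (Fin n1) (Fin n2) ℝ) (p : Fin n1 × Fin n2) : ℝ := A p.1 p.2

lemma frob_eq (A : Matrix (Fin n1) (Fin n2) ℝ) : frob A = l2 (toVec A) := by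
  simp [frob, l2, toVec, Fintype.sum_prod_type]

lemma minner_eq (A B : Matrix (Fin n1) (Fin n2) ℝ) : minner A B = toVec A ⬝ᵥ toVec B := by
  simp [minner, dotProduct, toVec, Fintype.sum_prod_type]

lemma specLe_l2 (f : Fin n1 × Fin n2 → ℝ) : SpecLe f (l2 f) := fun x y hx hy => by
  refine (dotProduct_le_l2 f fun p => x p.1 * y p.2).trans ?_
  exact mul_le_of_le_one_right (l2_nonneg _) (Real.sqrt_le_one.2 (sum_sq_prod_le_one hx hy))

lemma toVec_pairing (A : Matrix (Fin n1) (Fin n2) ℝ) (x : Fin n1 → ℝ) (y : Fin n2 → ℝ) :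
    ∑ p, toVec A p * (x p.1 * y p.2) = x ⬝ᵥ (A *ᵥ y) := by
  simp only [toVec, Fintype.sum_prod_type, dotProduct, mulVec, Finset.mul_sum]
  exact Finset.sum_congr rfl fun i _ => Finset.sum_congr rfl fun j _ => by ring

lemma SpecLe.l2_mulVec_le {A : Matrix (Fin n1) (Fin n2) ℝ} {t : ℝ} (hA : SpecLe (toVec A) t)
    (y : Fin n2 → ℝ) : l2 (A *ᵥ y) ≤ t * l2 y := by
  rcases eq_or_ne (l2 (A *ᵥ y)) 0 with h0 | h0
  · rcases eq_or_ne (l2 y) 0 with hy | hy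
    · rw [h0, hy, mul_zero]
    · have : 0 ≤ t := by simpa using hA 0 0 (by simp) (by simp)
      rw [h0]; exact mul_nonneg this (l2_nonneg _)
  · have h := hA.pairing_le (A *ᵥ y) y
    have h1 : (A *ᵥ y) ⬝ᵥ (A *ᵥ y) = l2 (A *ᵥ y) ^ 2 := by
      rw [l2_sq]; exact Finset.sum_congr rfl fun e _ => (sq _).symm
    rw [toVec_pairing, h1] at h
    have hpos : 0 < l2 (A *ᵥ y) := lt_of_le_of_ne (l2_nonneg _) h0.symm
    nlinarith

lemma specLe_of_spec_le {A : Matrix (Fin n1) (Fin n2) ℝ} (hA : spec A ≤ 1) :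
    SpecLe (toVec A) 1 := fun x y hx hy => by
  have hbdd : BddAbove {c : ℝ | ∃ x : Fin n2 → ℝ, (∑ j, x j ^ 2) ≤ 1 ∧
      c = √(∑ i, (∑ j, A i j * x j) ^ 2)} := by
    refine ⟨l2 (toVec A), ?_⟩
    rintro c ⟨z, hz, rfl⟩
    refine ((specLe_l2 (toVec A)).l2_mulVec_le z).trans ?_
    exact mul_le_of_le_one_right (l2_nonneg _) (Real.sqrt_le_one.2 hz)
  have h : l2 (A *ᵥ y) ≤ 1 := (le_csSup hbdd ⟨y, hy, rfl⟩).trans hA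
  rw [toVec_pairing]
  refine (dotProduct_le_l2 _ _).trans ?_
  exact mul_le_one₀ (Real.sqrt_le_one.2 hx) (l2_nonneg _) h

lemma spec_le_of_specLe {A : Matrix (Fin n1) (Fin n2) ℝ} (hA : SpecLe (toVec A) 1) :
    spec A ≤ 1 := by
  refine csSup_le ⟨_, 0, by simp, rfl⟩ ?_
  rintro c ⟨z, hz, rfl⟩
  refine (hA.l2_mulVec_le z).trans ?_
  rw [one_mul]
  exact Real.sqrt_le_one.2 hz

lemma SpecLe.l2_le {f : Fin n1 × Fin n2 → ℝ} {t : ℝ} (hf : SpecLe f t) : l2 f ≤ t * √n2 := by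
  have ht : 0 ≤ t := by simpa using hf 0 0 (by simp) (by simp)
  have hcol : ∀ j, ∑ i, f (i, j) ^ 2 ≤ t ^ 2 := by
    intro j
    set A : Matrix (Fin n1) (Fin n2) ℝ := Matrix.of fun i j => f (i, j)
    have h := SpecLe.l2_mulVec_le (A := A) hf (Pi.single j 1)
    have h1 : l2 (Pi.single j 1 : Fin n2 → ℝ) = 1 := by
      rw [l2, Finset.sum_eq_single j] <;> simp +contextual
    rw [h1, mul_one] at h
    have h2 := pow_le_pow_left₀ (l2_nonneg _) h 2
    rw [l2_sq] at h2
    simpa [A] using h2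
  have : l2 f = √(∑ j, ∑ i, f (i, j) ^ 2) := by rw [l2, Fintype.sum_prod_type_right]
  rw [this]
  refine Real.sqrt_le_iff.2 ⟨by positivity, ?_⟩
  refine (Finset.sum_le_sum fun j _ => hcol j).trans (le_of_eq ?_)
  rw [mul_pow, Real.sq_sqrt (Nat.cast_nonneg _)]
  simp [mul_comm]

lemma minner_le_nuc {A B : Matrix (Fin n1) (Fin n2) ℝ} (hB : SpecLe (toVec B) 1) :
    minner A B ≤ nuc A := by
  refine le_csSup ⟨l2 (toVec A) * √n2, ?_⟩ ⟨B, spec_le_of_specLe hB, rfl⟩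
  rintro c ⟨C, hC, rfl⟩
  rw [minner_eq]
  refine (dotProduct_le_l2 _ _).trans (mul_le_mul_of_nonneg_left ?_ (l2_nonneg _))
  simpa using (specLe_of_spec_le hC).l2_le

variable {U : Matrix (Fin n1) (Fin r) ℝ} {V : Matrix (Fin n2) (Fin r) ℝ}

lemma minner_svd (σ : Fin r → ℝ) (B : Matrix (Fin n1) (Fin n2) ℝ) :
    minner (U * diagonal σ * Vᵀ) B =
      ∑ k, σ k * ∑ p, toVec B p * (U.col k p.1 * V.col k p.2) := by
  have h : ∀ i j, (U * diagonal σ * Vᵀ) i j = ∑ k, U i k * σ k * V j k := fun i j => by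
    rw [Matrix.mul_apply]
    exact Finset.sum_congr rfl fun k _ => by rw [mul_diagonal, transpose_apply]
  simp only [minner, h, toVec, Fintype.sum_prod_type, Finset.mul_sum, Finset.sum_mul]
  rw [Finset.sum_congr rfl fun i _ => Finset.sum_comm, Finset.sum_comm]
  exact Finset.sum_congr rfl fun k _ => Finset.sum_congr rfl fun i _ =>
    Finset.sum_congr rfl fun j _ => by simp [Matrix.col]; ring

lemma sum_sq_col {n : ℕ} {U : Matrix (Fin n) (Fin r) ℝ} (hU : Uᵀ * U = 1) (k : Fin r) :
    ∑ i, U.col k i ^ 2 = 1 := by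
  have := congrFun (congrFun hU k) k
  rw [Matrix.mul_apply, one_apply_eq] at this
  rw [← this]
  exact Finset.sum_congr rfl fun i _ => sq _

lemma nuc_svd_le (hU : Uᵀ * U = 1) (hV : Vᵀ * V = 1) {σ : Fin r → ℝ} (hσ : ∀ k, 0 < σ k) :
    nuc (U * diagonal σ * Vᵀ) ≤ ∑ k, σ k := by
  refine csSup_le ⟨_, 0, spec_le_of_specLe fun x y _ _ => by simp [toVec], rfl⟩ ?_
  rintro c ⟨B, hB, rfl⟩
  rw [minner_svd]
  refine Finset.sum_le_sum fun k _ => mul_le_of_le_one_right (hσ k).le ?_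
  exact specLe_of_spec_le hB _ _ (sum_sq_col hU k).le (sum_sq_col hV k).le

lemma minner_svd_cert (hU : Uᵀ * U = 1) (hV : Vᵀ * V = 1) (σ : Fin r → ℝ)
    {B : Matrix (Fin n1) (Fin n2) ℝ} {w : Fin n1 × Fin n2 → ℝ} (hB : toVec B = uvVec U V + w)
    (hGw : projT U V *ᵥ w = 0) : minner (U * diagonal σ * Vᵀ) B = ∑ k, σ k := by
  rw [minner_svd]
  refine Finset.sum_congr rfl fun k _ => ?_
  simp only [hB, Pi.add_apply, add_mul, Finset.sum_add_distrib]
  have hcol : ∀ {n : ℕ} {U : Matrix (Fin n) (Fin r) ℝ}, Uᵀ * U = 1 →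
      Uᵀ *ᵥ U.col k = Pi.single k 1 := fun {n U} hU => by
    funext l
    have := congrFun (congrFun hU l) k
    rw [Matrix.mul_apply] at this
    rw [mulVec, dotProduct, Pi.single_apply]
    rw [one_apply] at this
    exact this
  have h1 := coprojT_pairing (U := U) (V := V) w (U.col k) (V.col k)
  have h2 : coproj U *ᵥ U.col k = 0 := by
    rw [coproj, sub_mulVec, one_mulVec, ← mulVec_mulVec, hcol hU, mulVec_single_one, sub_self]
  rw [hGw, sub_zero, h2] at h1
  rw [h1, sum_uvVec_mul, hcol hU, hcol hV]
  simp

end Nuclear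

/-! ### Recovery from a dual certificate -/

section Deterministic

variable {n1 n2 r : ℕ} {U : Matrix (Fin n1) (Fin r) ℝ} {V : Matrix (Fin n2) (Fin r) ℝ}

lemma nuc_add_ge (hU : Uᵀ * U = 1) (hV : Vᵀ * V = 1) {σ : Fin r → ℝ} (hσ : ∀ k, 0 < σ k)
    {w : Fin n1 × Fin n2 → ℝ} (hw : SpecLe w (1 / 2)) (hGw : projT U V *ᵥ w = 0)
    (H : Matrix (Fin n1) (Fin n2) ℝ) :
    nuc (U * diagonal σ * Vᵀ) + (uvVec U V + w) ⬝ᵥ toVec H +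
      1 / 2 * l2 (toVec H - projT U V *ᵥ toVec H) ≤ nuc (U * diagonal σ * Vᵀ + H) := by
  set h := toVec H with hh
  set G := projT U V with hGdef
  have hG : Gᵀ = G := projT_transpose
  have hG2 : G * G = G := projT_idem hU hV
  set d := h - G *ᵥ h with hd
  set u : Fin n1 × Fin n2 → ℝ := (1 / 2 * (l2 d)⁻¹) • d with hu
  have hGd : G *ᵥ d = 0 := by rw [hd, mulVec_sub, mulVec_mulVec, hG2, sub_self]
  have hGu : G *ᵥ u = 0 := by rw [hu, mulVec_smul, hGd, smul_zero]
  have huspec : SpecLe u (1 / 2) := by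
    refine ((specLe_l2 d).smul (c := 1 / 2 * (l2 d)⁻¹)
      (by have := l2_nonneg d; positivity)).mono ?_
    rw [mul_assoc]
    exact mul_le_of_le_one_right (by norm_num) inv_mul_le_one
  have hdd : d ⬝ᵥ h = l2 d ^ 2 := by
    have h1 : d ⬝ᵥ (G *ᵥ h) = 0 := by
      rw [dotProduct_mulVec, ← mulVec_transpose, hG, hGd, zero_dotProduct]
    have h2 : l2 d ^ 2 = d ⬝ᵥ d := by
      rw [l2_sq]; exact Finset.sum_congr rfl fun e _ => sq _
    rw [h2]
    conv_rhs => rw [hd, dotProduct_sub, ← hd, h1, sub_zero]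
  have huh : u ⬝ᵥ h = 1 / 2 * l2 d := by
    rw [hu, smul_dotProduct, hdd, smul_eq_mul]
    by_cases h0 : l2 d = 0
    · simp [h0]
    · field_simp
  set B : Matrix (Fin n1) (Fin n2) ℝ := Matrix.of fun i j => (uvVec U V + (w + u)) (i, j) with hB
  have hBv : toVec B = uvVec U V + (w + u) := rfl
  have hGwu : G *ᵥ (w + u) = 0 := by rw [mulVec_add, hGw, hGu, add_zero]
  have hspec : SpecLe (toVec B) 1 := by
    rw [hBv]
    refine specLe_uvVec_add hU hV ((hw.add huspec).mono (by norm_num)) hGwu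
  have h1 := minner_le_nuc (A := U * diagonal σ * Vᵀ + H) hspec
  have h2 : minner (U * diagonal σ * Vᵀ + H) B =
      minner (U * diagonal σ * Vᵀ) B + minner H B := by
    simp [minner, add_mul, Finset.sum_add_distrib]
  rw [h2, minner_svd_cert hU hV σ hBv hGwu, minner_eq, hBv, dotProduct_comm, ← hh, ← add_assoc,
    add_dotProduct, huh] at h1
  linarith [nuc_svd_le hU hV hσ]

lemma abs_add_sgn_ge (x : Bool) {a : ℝ} (ha : 0 < a) (t : ℝ) :
    sgn x * t ≤ |sgn x * a + t| - |sgn x * a| := by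
  cases x
  · simp only [sgn, Bool.false_eq_true, if_false, neg_mul, one_mul, abs_neg, abs_of_pos ha]
    linarith [neg_abs_le (-a + t)]
  · simp only [sgn, if_true, one_mul, abs_of_pos ha]
    linarith [le_abs_self (a + t)]

lemma l2_le_sum_abs {ι : Type*} [Fintype ι] (v : ι → ℝ) : l2 v ≤ ∑ e, |v e| := by
  refine Real.sqrt_le_iff.2 ⟨Finset.sum_nonneg fun _ _ => abs_nonneg _, ?_⟩
  rw [sq, Finset.sum_mul]
  refine Finset.sum_le_sum fun e he => ?_
  rw [← sq_abs, sq]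
  exact mul_le_mul_of_nonneg_left
    (Finset.single_le_sum (f := fun e => |v e|) (fun _ _ => abs_nonneg _) he) (abs_nonneg _)

lemma l1_add_ge {b ε : Fin n1 × Fin n2 → Bool} {a : Fin n1 × Fin n2 → ℝ} (ha : ∀ p, 0 < a p)
    {S : Matrix (Fin n1) (Fin n2) ℝ}
    (hS : ∀ p, toVec S p = if b p then sgn (ε p) * a p else 0) {lam : ℝ} (hl : 0 ≤ lam)
    {Λ : Fin n1 × Fin n2 → ℝ} (h1 : ∀ p, b p = true → Λ p = lam * sgn (ε p))
    (h2 : ∀ p, b p = false → |Λ p| ≤ lam / 2) (K : Matrix (Fin n1) (Fin n2) ℝ) :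
    lam * l1norm S + Λ ⬝ᵥ toVec K + lam / 2 * l2 (fun p => if b p then 0 else toVec K p) ≤
      lam * l1norm (S + K) := by
  have hl1 : ∀ A : Matrix (Fin n1) (Fin n2) ℝ, l1norm A = ∑ p, |toVec A p| := fun A => by
    simp [l1norm, toVec, Fintype.sum_prod_type]
  have h3 := mul_le_mul_of_nonneg_left
    (l2_le_sum_abs fun p => if b p then 0 else toVec K p) (show 0 ≤ lam / 2 by linarith)
  refine (add_le_add_right h3 _).trans ?_
  rw [hl1, hl1, dotProduct, Finset.mul_sum, Finset.mul_sum, Finset.mul_sum,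
    ← Finset.sum_add_distrib, ← Finset.sum_add_distrib]
  refine Finset.sum_le_sum fun p _ => ?_
  have hadd : toVec (S + K) p = toVec S p + toVec K p := rfl
  rw [hadd, hS]
  by_cases hp : b p = true
  · simp only [hp, if_true, h1 p hp, abs_zero, mul_zero, add_zero]
    nlinarith [mul_le_mul_of_nonneg_left (abs_add_sgn_ge (ε p) (ha p) (toVec K p)) hl]
  · simp only [hp, Bool.false_eq_true, if_false, zero_add, abs_zero, mul_zero]
    have h4 := h2 p (by simpa using hp)
    have h5 : Λ p * toVec K p ≤ |Λ p| * |toVec K p| := by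
      rw [← abs_mul]; exact le_abs_self _
    nlinarith [mul_le_mul_of_nonneg_right h4 (abs_nonneg (toVec K p))]

/-- The properties of a dual certificate `Λ` for the support `b`, the signs `ε` and the column and
row spaces `U`, `V`. -/
structure IsCert (U : Matrix (Fin n1) (Fin r) ℝ) (V : Matrix (Fin n2) (Fin r) ℝ)
    (b ε : Fin n1 × Fin n2 → Bool) (lam : ℝ) (Λ : Fin n1 × Fin n2 → ℝ) : Prop where
  on : ∀ p, b p = true → Λ p = lam * sgn (ε p)
  off : ∀ p, b p = false → |Λ p| ≤ lam / 2
  tangent : l2 (projT U V *ᵥ Λ - uvVec U V) ≤ lam / 8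
  normal : SpecLe (Λ - projT U V *ᵥ Λ) (1 / 2)
  restriction : ∀ f : Fin n1 × Fin n2 → ℝ,
    ∑ e, (if b e then (projT U V *ᵥ f) e ^ 2 else 0) ≤ 1 / 4 * ∑ e, f e ^ 2

lemma l2_proj_le_of_restriction {ι : Type*} [Fintype ι] {G : Matrix ι ι ℝ} (hG2 : G * G = G)
    {b : ι → Bool}
    (hb : ∀ f : ι → ℝ, ∑ e, (if b e then (G *ᵥ f) e ^ 2 else 0) ≤ 1 / 4 * ∑ e, f e ^ 2)
    (h k : ι → ℝ) :
    l2 (G *ᵥ h) ≤ 2 * (l2 (h + k) + l2 (h - G *ᵥ h) + l2 (fun p => if b p then 0 else k p)) := by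
  set g := G *ᵥ h with hg
  have hgg : G *ᵥ g = g := by rw [hg, mulVec_mulVec, hG2]
  have h1 : l2 (fun p => if b p then g p else 0) ≤ 1 / 2 * l2 g := by
    have h2 := hb g
    rw [hgg, ← l2_sq] at h2
    refine abs_le_of_sq_le_sq' ?_ (by have := l2_nonneg g; positivity) |>.2
    rw [l2_sq, mul_pow]
    refine le_of_eq_of_le (Finset.sum_congr rfl fun e _ => ?_) (h2.trans (by norm_num))
    split_ifs <;> simp
  have h2 : l2 (fun p => if b p then 0 else g p) ≤
      l2 (h + k) + l2 (h - g) + l2 (fun p => if b p then 0 else k p) := by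
    have h3 : (fun p => if b p then 0 else g p) =
        ((fun p => if b p then 0 else (h + k) p) - fun p => if b p then 0 else (h - g) p) -
          fun p => if b p then 0 else k p := by
      funext p
      simp only [Pi.sub_apply, Pi.add_apply]
      split_ifs <;> ring
    have h4 : ∀ v : ι → ℝ, l2 (fun p => if b p then 0 else v p) ≤ l2 v := fun v =>
      l2_le_l2 fun e => by split_ifs <;> simp
    rw [h3]
    refine (l2_sub_le _ _).trans (add_le_add_left ((l2_sub_le _ _).trans ?_) _)
    exact add_le_add (h4 _) (h4 _)
  have h5 : g = (fun p => if b p then g p else 0) + fun p => if b p then 0 else g p := by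
    funext p; simp only [Pi.add_apply]; split_ifs <;> simp
  have h6 := l2_add_le (fun p => if b p then g p else 0) fun p => if b p then 0 else g p
  rw [← h5] at h6
  linarith

theorem pairDist_le_of_cert (hU : Uᵀ * U = 1) (hV : Vᵀ * V = 1) (hn1 : 100 ≤ n1) (hn2 : 0 < n2)
    {σ : Fin r → ℝ} (hσ : ∀ k, 0 < σ k) {a : Fin n1 × Fin n2 → ℝ} (ha : ∀ p, 0 < a p)
    {b ε : Fin n1 × Fin n2 → Bool} {S : Matrix (Fin n1) (Fin n2) ℝ}
    (hS : ∀ p, toVec S p = if b p then sgn (ε p) * a p else 0)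
    (huv : ∑ p, uvVec U V p ^ 2 ≤ n2 / 100) {Λ : Fin n1 × Fin n2 → ℝ}
    (hΛ : IsCert U V b ε (√n1)⁻¹ Λ) {Z Lh Sh : Matrix (Fin n1) (Fin n2) ℝ}
    (hmin : IsRootPCPMin (U * diagonal σ * Vᵀ + S + Z) (√n1)⁻¹ (√((n2 : ℝ) / 2)) Lh Sh) :
    pairDist Lh Sh (U * diagonal σ * Vᵀ) S ≤ 560 * √((n1 : ℝ) * n2) * frob Z := by
  set L := U * diagonal σ * Vᵀ with hL
  set G := projT U V with hGdef
  have hG : Gᵀ = G := projT_transpose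
  have hG2 : G * G = G := projT_idem hU hV
  set lam : ℝ := (√n1)⁻¹ with hlam
  set μ : ℝ := √((n2 : ℝ) / 2) with hμ
  set H := Lh - L with hH
  set K := Sh - S with hK
  have hmin' := hmin L S
  have hLh : Lh = L + H := by rw [hH]; abel
  have hSh : Sh = S + K := by rw [hK]; abel
  have e1 : frob (L + S - (L + S + Z)) = l2 (toVec Z) := by
    rw [frob_eq, ← l2_neg]; congr 1; funext p; simp [toVec]
  have e2 : frob (Lh + Sh - (L + S + Z)) = l2 (toVec H + toVec K - toVec Z) := by
    rw [frob_eq, hLh, hSh]; congr 1; funext p; simp [toVec]; ring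
  rw [e1, e2, hLh, hSh] at hmin'
  set h := toVec H with hh
  set k := toVec K with hk
  set z := l2 (toVec Z) with hz
  have hz0 : 0 ≤ z := l2_nonneg _
  set w := Λ - G *ᵥ Λ with hw
  have hGw : G *ᵥ w = 0 := by rw [hw, mulVec_sub, mulVec_mulVec, hG2, sub_self]
  have hs1 : (10 : ℝ) ≤ √n1 := by
    refine Real.le_sqrt_of_sq_le ?_
    have : (100 : ℝ) ≤ n1 := by exact_mod_cast hn1
    linarith
  have hl0 : 0 < lam := by rw [hlam]; positivity
  have hl1 : lam ≤ 1 / 10 := by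
    rw [hlam, one_div]; exact inv_anti₀ (by norm_num) hs1
  have hls : lam * √n1 = 1 := inv_mul_cancel₀ (by positivity)
  have hb1 := nuc_add_ge hU hV hσ hΛ.normal hGw H
  have hb2 := l1_add_ge ha hS hl0.le hΛ.on hΛ.off K
  have hgh := l2_proj_le_of_restriction hG2 hΛ.restriction h k
  rw [← hh, ← hGdef, ← hL, ← hw] at hb1
  rw [← hk] at hb2
  set A := l2 (h + k) with hA
  set B := l2 (h - G *ᵥ h) with hB
  set C := l2 (fun p => if b p then 0 else k p) with hC
  have hA0 : 0 ≤ A := l2_nonneg _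
  have hB0 : 0 ≤ B := l2_nonneg _
  have hC0 : 0 ≤ C := l2_nonneg _
  -- the pairing of the certificate with the perturbation
  have hpair : -(lam / 8) * l2 (G *ᵥ h) - l2 Λ * A ≤ (uvVec U V + w) ⬝ᵥ h + Λ ⬝ᵥ k := by
    have h1 : (uvVec U V + w) ⬝ᵥ h + Λ ⬝ᵥ k =
        Λ ⬝ᵥ (h + k) - (G *ᵥ Λ - uvVec U V) ⬝ᵥ h := by
      rw [hw, add_dotProduct, sub_dotProduct, sub_dotProduct, dotProduct_add]; ring
    have h2 : (G *ᵥ Λ - uvVec U V) ⬝ᵥ h = (G *ᵥ Λ - uvVec U V) ⬝ᵥ (G *ᵥ h) := by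
      rw [dotProduct_mulVec, ← mulVec_transpose, hG, mulVec_sub, mulVec_mulVec, hG2, hGdef,
        projT_uvVec hU]
    have h3 := (dotProduct_le_l2 (G *ᵥ Λ - uvVec U V) (G *ᵥ h)).trans
      (mul_le_mul_of_nonneg_right hΛ.tangent (l2_nonneg _))
    have h4 := dotProduct_le_l2 (-Λ) (h + k)
    rw [l2_neg, neg_dotProduct] at h4
    rw [h1, h2]
    linarith
  have hzA : A - z ≤ l2 (h + k - toVec Z) := by
    have := l2_add_le (h + k - toVec Z) (toVec Z)
    rw [sub_add_cancel] at this
    linarith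
  have hs2 : (1 : ℝ) ≤ √n2 := by
    refine Real.le_sqrt_of_sq_le ?_
    have : (1 : ℝ) ≤ n2 := by exact_mod_cast hn2
    linarith
  have hs2sq : √(n2 : ℝ) ^ 2 = n2 := Real.sq_sqrt (Nat.cast_nonneg _)
  have hΛl : l2 Λ ≤ 0.6125 * √n2 := by
    have h1 : l2 (uvVec U V) ≤ 0.1 * √n2 := by
      refine Real.sqrt_le_iff.2 ⟨by positivity, huv.trans (le_of_eq ?_)⟩
      rw [mul_pow, hs2sq]; ring
    have h2 := SpecLe.l2_le hΛ.normal
    have h3 : Λ = (Λ - G *ᵥ Λ) + ((G *ᵥ Λ - uvVec U V) + uvVec U V) := by abel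
    have h4 := l2_add_le (Λ - G *ᵥ Λ) ((G *ᵥ Λ - uvVec U V) + uvVec U V)
    rw [← h3] at h4
    have h5 := l2_add_le (G *ᵥ Λ - uvVec U V) (uvVec U V)
    have h6 := hΛ.tangent
    linarith
  have hμ1 : 0.7 * √n2 ≤ μ := by
    refine Real.le_sqrt_of_sq_le ?_
    rw [mul_pow, hs2sq]
    have : (0 : ℝ) ≤ n2 := Nat.cast_nonneg _
    linarith
  have hμ2 : μ ≤ 0.71 * √n2 := by
    refine Real.sqrt_le_iff.2 ⟨by positivity, ?_⟩
    rw [mul_pow, hs2sq]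
    have : (0 : ℝ) ≤ n2 := Nat.cast_nonneg _
    linarith
  have hμ0 : 0 ≤ μ := Real.sqrt_nonneg _
  set q := √(n2 : ℝ) with hq
  have hmain : 0.06 * q * A + 1 / 4 * B + lam / 4 * C ≤ 1.42 * q * z := by
    have h1 := mul_le_mul_of_nonneg_left hzA hμ0
    have h2 := mul_le_mul_of_nonneg_right hΛl hA0
    have h3 := mul_le_mul_of_nonneg_right hμ1 hA0
    have h4 := mul_le_mul_of_nonneg_right hμ2 hz0
    have h5 := mul_le_mul_of_nonneg_left hgh (show 0 ≤ lam / 8 by positivity)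
    have h6 := mul_le_mul_of_nonneg_right hl1 hA0
    have h7 := mul_le_mul_of_nonneg_right hl1 hB0
    have h8 := mul_le_mul_of_nonneg_right hs2 hA0
    linarith
  have hA1 : A ≤ 24 * z := by
    have h1 : 0.06 * q * A ≤ 1.42 * q * z := by
      have : 0 ≤ lam / 4 * C := by positivity
      linarith
    have h2 : q * (0.06 * A) ≤ q * (1.42 * z) := by linarith
    have h3 := le_of_mul_le_mul_left h2 (by linarith)
    linarith
  have hB1 : B ≤ 6 * (q * z) := by
    have h1 : 0 ≤ 0.06 * q * A := by positivity
    have h2 : 0 ≤ lam / 4 * C := by positivity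
    have h3 : 0 ≤ q * z := by positivity
    linarith
  have hC1 : C ≤ 6 * (√n1 * (q * z)) := by
    have h1 : 0 ≤ 0.06 * q * A := by positivity
    have h2 : lam * C ≤ 6 * (q * z) := by
      have h3 : 0 ≤ q * z := by positivity
      linarith
    have h3 := mul_le_mul_of_nonneg_left h2 (Real.sqrt_nonneg n1)
    have h4 : √n1 * (lam * C) = C := by rw [← mul_assoc, mul_comm (√(n1 : ℝ)), hls, one_mul]
    linarith
  have hhl : l2 h ≤ 2 * A + 3 * B + 2 * C := by
    have h1 := l2_add_le (G *ᵥ h) (h - G *ᵥ h)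
    rw [add_sub_cancel] at h1
    linarith
  have hkl : l2 k ≤ A + l2 h := by
    have h1 := l2_sub_le (h + k) h
    rwa [add_sub_cancel_left] at h1
  have hpd : pairDist Lh Sh L S ≤ l2 h + l2 k := by
    rw [pairDist, ← hH, ← hK, frob_eq, frob_eq]
    refine Real.sqrt_le_iff.2 ⟨add_nonneg (l2_nonneg _) (l2_nonneg _), ?_⟩
    nlinarith [l2_nonneg h, l2_nonneg k]
  refine hpd.trans ?_
  rw [Real.sqrt_mul (Nat.cast_nonneg _), frob_eq, ← hz, ← hq]
  have h1 : z ≤ √n1 * (q * z) := by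
    have h3 := mul_le_mul_of_nonneg_right hs2 hz0
    have h4 := mul_le_mul_of_nonneg_right hs1 (show 0 ≤ q * z by positivity)
    linarith
  have h2 : q * z ≤ √n1 * (q * z) := by
    have h4 := mul_le_mul_of_nonneg_right hs1 (show 0 ≤ q * z by positivity)
    have : 0 ≤ q * z := by positivity
    linarith
  have h3 : 560 * (√n1 * q) * z = 560 * (√n1 * (q * z)) := by ring
  rw [h3]
  have h4 : 0 ≤ √n1 * (q * z) := by positivity
  linarith

end Deterministic

/-! ### Comparison with a Bernoulli support -/

lemma binomial_term_succ_le {N m j : ℕ} (hmj : m ≤ j) (hj : j < N) :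
    N.choose (j + 1) * (m ^ (j + 1) * (N - m) ^ (N - (j + 1))) ≤
      N.choose j * (m ^ j * (N - m) ^ (N - j)) := by
  have h1 := Nat.choose_succ_right_eq N j
  have h2 : N - j = N - (j + 1) + 1 := by omega
  refine le_of_mul_le_mul_right (a := j + 1) ?_ (Nat.succ_pos j)
  calc N.choose (j + 1) * (m ^ (j + 1) * (N - m) ^ (N - (j + 1))) * (j + 1)
      = (N.choose (j + 1) * (j + 1)) * (m ^ j * (N - m) ^ (N - (j + 1))) * m := by ring
    _ = N.choose j * (m ^ j * (N - m) ^ (N - (j + 1))) * ((N - j) * m) := by rw [h1]; ring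
    _ ≤ N.choose j * (m ^ j * (N - m) ^ (N - (j + 1))) * ((N - m) * (j + 1)) :=
        Nat.mul_le_mul_left _ (Nat.mul_le_mul (by omega) (by omega))
    _ = N.choose j * (m ^ j * (N - m) ^ (N - j)) * (j + 1) := by rw [h2, pow_succ]; ring

lemma binomial_term_le_of_le {N m j : ℕ} (hmj : m ≤ j) (hj : j ≤ N) :
    N.choose j * (m ^ j * (N - m) ^ (N - j)) ≤ N.choose m * (m ^ m * (N - m) ^ (N - m)) := by
  induction j, hmj using Nat.le_induction with
  | base => exact le_rfl
  | succ j hmj ih => exact (binomial_term_succ_le hmj hj).trans (ih (by omega))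

/-- The number `m` is a mode of the binomial distribution with parameters `N` and `m / N`. -/
lemma binomial_term_le {N m j : ℕ} (hm : m ≤ N) (hj : j ≤ N) :
    N.choose j * (m ^ j * (N - m) ^ (N - j)) ≤ N.choose m * (m ^ m * (N - m) ^ (N - m)) := by
  rcases le_total m j with h | h
  · exact binomial_term_le_of_le h hj
  · have h1 := binomial_term_le_of_le (N := N) (m := N - m) (j := N - j) (by omega) (by omega)
    rw [Nat.choose_symm hj, Nat.choose_symm hm, Nat.sub_sub_self hm, Nat.sub_sub_self hj] at h1
    rwa [mul_comm (m ^ j), mul_comm (m ^ m)]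

lemma pow_le_succ_mul_binomial_term {N m : ℕ} (hm : m ≤ N) :
    N ^ N ≤ (N + 1) * (N.choose m * (m ^ m * (N - m) ^ (N - m))) := by
  have h1 : N ^ N = ∑ j ∈ Finset.range (N + 1), N.choose j * (m ^ j * (N - m) ^ (N - j)) := by
    have h2 := add_pow m (N - m) N
    rw [Nat.add_sub_cancel' hm] at h2
    rw [h2]
    exact Finset.sum_congr rfl fun j _ => by simp only [Nat.cast_id]; ring
  rw [h1]
  refine (Finset.sum_le_card_nsmul _ _ _ fun j hj =>
    binomial_term_le hm (Nat.lt_succ_iff.1 (Finset.mem_range.1 hj))).trans ?_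
  simp

lemma one_le_succ_mul_binomial {N m : ℕ} (hN : 0 < N) (hm : m ≤ N) :
    1 ≤ ((N : ℝ) + 1) * (N.choose m * (((m : ℝ) / N) ^ m * (1 - (m : ℝ) / N) ^ (N - m))) := by
  have h1 : ((N ^ N : ℕ) : ℝ) ≤ ((N + 1) * (N.choose m * (m ^ m * (N - m) ^ (N - m))) : ℕ) := by
    exact_mod_cast pow_le_succ_mul_binomial_term hm
  push_cast [Nat.cast_sub hm] at h1
  have hN' : (0 : ℝ) < N := by exact_mod_cast hN
  have h2 : ((m : ℝ) / N) ^ m * (1 - (m : ℝ) / N) ^ (N - m) =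
      ((m : ℝ) ^ m * ((N : ℝ) - m) ^ (N - m)) / (N : ℝ) ^ N := by
    rw [one_sub_div hN'.ne', div_pow, div_pow, div_mul_div_comm, ← pow_add,
      Nat.add_sub_cancel' hm]
  rw [h2, ← mul_div_assoc, ← mul_div_assoc, one_le_div (by positivity)]
  exact h1

lemma bernW_decide_mem {ι : Type*} [Fintype ι] [DecidableEq ι] (p : ℝ) (s : Finset ι) :
    bernW p (fun e => decide (e ∈ s)) = p ^ s.card * (1 - p) ^ (Fintype.card ι - s.card) := by
  simp only [bernW, decide_eq_true_eq]
  rw [Finset.prod_ite, Finset.prod_const, Finset.prod_const]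
  congr 2
  · simp
  · rw [Finset.filter_not, Finset.filter_mem_eq_inter, Finset.univ_inter,
      Finset.card_sdiff_of_subset (Finset.subset_univ _), Finset.card_univ]

lemma bernW_half {ι : Type*} [Fintype ι] (b : ι → Bool) :
    bernW (1 / 2) b = (1 / 2 : ℝ) ^ Fintype.card ι := by
  have : (1 : ℝ) - 1 / 2 = 1 / 2 := by norm_num
  simp only [bernW, this, ite_self, Finset.prod_const, Finset.card_univ]

/-- Passing from a uniformly random support of size `m` to a Bernoulli support costs a factor
`n1 * n2 + 1`. -/
lemma one_sub_le_unifProb {n1 n2 m : ℕ} (hN : 0 < n1 * n2) (hm : m ≤ n1 * n2)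
    (E : (Fin n1 × Fin n2 → Bool) → (Fin n1 × Fin n2 → Bool) → Prop) :
    1 - ((n1 * n2 : ℕ) + 1 : ℝ) *
        wprob (fun x : (Fin n1 × Fin n2 → Bool) × (Fin n1 × Fin n2 → Bool) =>
            bernW ((m : ℝ) / (n1 * n2 : ℕ)) x.1 * bernW (1 / 2) x.2)
          (fun x => ¬ E x.1 x.2) ≤
      unifProb fun ω : SampleSpace n1 n2 m => E (fun e => decide (e ∈ ω.1.1)) ω.2 := by
  classical
  set N := n1 * n2 with hNdef
  set p : ℝ := (m : ℝ) / N with hp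
  have hN' : (0 : ℝ) < N := by exact_mod_cast hN
  have hp0 : 0 ≤ p := by positivity
  have hp1 : p ≤ 1 := (div_le_one hN').2 (by exact_mod_cast hm)
  have hcardι : Fintype.card (Fin n1 × Fin n2) = N := by simp [hNdef]
  let φ : SampleSpace n1 n2 m → (Fin n1 × Fin n2 → Bool) × (Fin n1 × Fin n2 → Bool) :=
    fun ω => (fun e => decide (e ∈ ω.1.1), ω.2)
  have hφ : Function.Injective φ := by
    rintro ⟨⟨s, hs⟩, ε⟩ ⟨⟨t, ht⟩, ε'⟩ h
    simp only [φ, Prod.mk.injEq] at h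
    obtain ⟨h1, rfl⟩ := h
    have : s = t := by
      ext e
      simpa using congrFun h1 e
    subst this
    rfl
  have hcard : (Fintype.card (SampleSpace n1 n2 m) : ℝ) = N.choose m * 2 ^ N := by
    rw [Fintype.card_prod, Fintype.card_finset_len, Fintype.card_fun, hcardι]
    simp
  have hpos : (0 : ℝ) < Fintype.card (SampleSpace n1 n2 m) := by
    rw [hcard]
    have := Nat.choose_pos hm
    positivity
  set w0 : ℝ := p ^ m * (1 - p) ^ (N - m) * (1 / 2) ^ N with hw0
  set bad := Finset.univ.filter fun ω : SampleSpace n1 n2 m => ¬ E (φ ω).1 (φ ω).2 with hbad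
  have h1 : (bad.card : ℝ) * w0 ≤ wprob
      (fun x : (Fin n1 × Fin n2 → Bool) × (Fin n1 × Fin n2 → Bool) =>
        bernW p x.1 * bernW (1 / 2) x.2) (fun x => ¬ E x.1 x.2) := by
    have h2 : (bad.card : ℝ) * w0 = ∑ ω ∈ bad, bernW p (φ ω).1 * bernW (1 / 2) (φ ω).2 *
        (if ¬ E (φ ω).1 (φ ω).2 then 1 else 0) := by
      rw [← nsmul_eq_mul, ← Finset.sum_const]
      refine Finset.sum_congr rfl fun ω hω => ?_
      rw [if_pos (Finset.mem_filter.1 hω).2, mul_one, bernW_half, bernW_decide_mem, hcardι,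
        ω.1.2]
    rw [h2, wprob, wexp, ← Finset.sum_image (g := φ)
      (f := fun x => bernW p x.1 * bernW (1 / 2) x.2 * (if ¬ E x.1 x.2 then (1 : ℝ) else 0))
      hφ.injOn]
    refine (Finset.sum_le_sum_of_subset_of_nonneg (Finset.subset_univ _) fun x _ _ => ?_).trans
      (le_of_eq (Finset.sum_congr rfl fun x _ => ?_))
    · refine mul_nonneg (mul_nonneg (bernW_nonneg hp0 hp1 _)
        (bernW_nonneg (by norm_num) (by norm_num) _)) ?_
      split_ifs <;> norm_num
    · by_cases hx : E x.1 x.2 <;> simp [hx]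
  have h3 : 1 ≤ ((N : ℝ) + 1) * (Fintype.card (SampleSpace n1 n2 m) * w0) := by
    refine (one_le_succ_mul_binomial hN hm).trans (le_of_eq ?_)
    have : (2 : ℝ) ^ N * (1 / 2) ^ N = 1 := by rw [← mul_pow]; norm_num
    rw [hcard, hw0]
    linear_combination (-((N : ℝ) + 1) * N.choose m * p ^ m * (1 - p) ^ (N - m)) * this
  have h4 := Finset.card_filter_add_card_filter_not (s := Finset.univ)
    (fun ω : SampleSpace n1 n2 m => E (φ ω).1 (φ ω).2)
  rw [Finset.card_univ] at h4
  have h5 : ((Finset.univ.filter fun ω : SampleSpace n1 n2 m => E (φ ω).1 (φ ω).2).card : ℝ) =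
      Fintype.card (SampleSpace n1 n2 m) - bad.card := by
    rw [← h4]; push_cast; ring
  have h6 : unifProb (fun ω : SampleSpace n1 n2 m => E (fun e => decide (e ∈ ω.1.1)) ω.2) =
      ((Finset.univ.filter fun ω : SampleSpace n1 n2 m => E (φ ω).1 (φ ω).2).card : ℝ) /
        Fintype.card (SampleSpace n1 n2 m) := by
    unfold unifProb
    congr!
  rw [h6, h5, sub_div, div_self hpos.ne']
  refine sub_le_sub_left ?_ _
  rw [div_le_iff₀ hpos]
  calc (bad.card : ℝ) ≤ bad.card * (((N : ℝ) + 1) * (Fintype.card (SampleSpace n1 n2 m) * w0)) :=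
        le_mul_of_one_le_right (by positivity) h3
    _ = ((N : ℝ) + 1) * (bad.card * w0) * Fintype.card (SampleSpace n1 n2 m) := by ring
    _ ≤ _ := by gcongr

/-! ### Existence of a dual certificate -/

section Certificate

variable {n1 n2 r : ℕ} {U : Matrix (Fin n1) (Fin r) ℝ} {V : Matrix (Fin n2) (Fin r) ℝ}

lemma exists_isCert {b ε : Fin n1 × Fin n2 → Bool} {q M σ κ : ℝ} {k : ℕ} (hn1 : 0 < n1)
    (hq : 0 < q) (hM : 0 < M) (hMq : 128 * (M * √n1) ≤ q)
    (hk : √((n1 : ℝ) * n2) * ((1 / 2) ^ k * M) ≤ (√n1)⁻¹ / 8)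
    (hκσ : 16 * κ + 32 * σ ≤ 1 / 4)
    (hgolf : GolfGood (projT U V) q M (uvVec U V) k b) (hsign : SignGood (projT U V) σ b ε)
    (hspec : SpecLe (signVec b ε) (16 * (κ * √n1)))
    (hres : ∀ f : Fin n1 × Fin n2 → ℝ,
      ∑ e, (if b e then (projT U V *ᵥ f) e ^ 2 else 0) ≤ 1 / 4 * ∑ e, f e ^ 2) :
    ∃ Λ, IsCert U V b ε (√n1)⁻¹ Λ := by
  obtain ⟨Y, hY0, hYle, hYZ, hYspec⟩ := hgolf
  obtain ⟨h, hh0, hhle, hhspec, hhG⟩ := hsign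
  have hn : (0 : ℝ) < √n1 := Real.sqrt_pos.2 (by exact_mod_cast hn1)
  set l : ℝ := (√n1)⁻¹ with hl
  have hl0 : 0 < l := inv_pos.2 hn
  have hln : l * √n1 = 1 := inv_mul_cancel₀ hn.ne'
  have hMq' : M / q * √n1 ≤ 1 / 128 := by
    rw [div_mul_eq_mul_div, div_le_iff₀ hq]
    linarith
  have hMql : M / q ≤ l / 128 := by
    have := mul_le_mul_of_nonneg_right hMq' hl0.le
    rw [mul_assoc, mul_comm (√_), hln] at this
    linarith
  have hk1 : (0 : ℝ) ≤ 1 - (1 / 2) ^ k := sub_nonneg.2 (pow_le_one₀ (by norm_num) (by norm_num))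
  have hk2 : (1 : ℝ) - (1 / 2) ^ k ≤ 1 := sub_le_self _ (by positivity)
  have hMq0 : 0 ≤ M / q := by positivity
  have hG : projT U V *ᵥ (Y + l • (signVec b ε + h)) = projT U V *ᵥ Y := by
    rw [Matrix.mulVec_add, Matrix.mulVec_smul, hhG, smul_zero, add_zero]
  refine ⟨Y + l • (signVec b ε + h), ⟨fun p hp => ?_, fun p hp => ?_, ?_, ?_, hres⟩⟩
  · simp [hY0 p hp, hh0 p hp, signVec, hp]
  · have h1 : |Y p| ≤ l / 4 := by
      refine (hYle p).trans ?_
      calc 2 * M / q * (1 - (1 / 2) ^ k) ≤ 2 * M / q * 1 := by gcongr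
        _ = 2 * (M / q) := by ring
        _ ≤ l / 4 := by linarith
    have h2 : (Y + l • (signVec b ε + h)) p = Y p + l * h p := by simp [signVec, hp]
    rw [h2]
    refine (abs_add_le _ _).trans ?_
    rw [abs_mul, abs_of_pos hl0]
    nlinarith [mul_le_mul_of_nonneg_left (hhle p) hl0.le]
  · rw [hG]
    refine le_trans ?_ hk
    refine Real.sqrt_le_iff.2 ⟨by positivity, ?_⟩
    rw [mul_pow, Real.sq_sqrt (by positivity)]
    refine (Finset.sum_le_card_nsmul _ _ (((1 / 2) ^ k * M) ^ 2) fun e _ => ?_).trans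
      (le_of_eq (by simp))
    rw [← sq_abs]
    refine pow_le_pow_left₀ (abs_nonneg _) ?_ 2
    have := hYZ e
    rwa [← abs_neg, ← Pi.neg_apply, neg_sub] at this
  · rw [hG, add_sub_right_comm]
    refine (hYspec.add ((hspec.add hhspec).smul hl0.le)).mono ?_
    have h3 : 32 * (M / q * √n1) * (1 - (1 / 2) ^ k) ≤ 32 * (M / q * √n1) * 1 := by gcongr
    have h4 : l * (16 * (κ * √n1) + 16 * (2 * σ * √n1)) = 16 * κ + 32 * σ := by
      linear_combination (16 * κ + 32 * σ) * hln
    linarith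

end Certificate

section Product

variable {ι : Type*} [Fintype ι] [DecidableEq ι]

lemma wprob_fst (w : (ι → Bool) → ℝ) (p : ℝ) (B : (ι → Bool) → Prop) :
    wprob (fun x : (ι → Bool) × (ι → Bool) => w x.1 * bernW p x.2) (fun x => B x.1) =
      wprob w B := by
  rw [wprob, wexp_prod]
  unfold wprob
  congr 1
  funext b
  by_cases hb : B b <;> simp only [hb, if_true, if_false, wexp_bernW_const]

lemma wprob_and_le {p s t : ℝ} (hp0 : 0 ≤ p) (hp1 : p ≤ 1) (ht : 0 ≤ t)
    (B : (ι → Bool) → Prop) (S : (ι → Bool) → (ι → Bool) → Prop)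
    (h : ∀ b, B b → wprob (bernW s) (S b) ≤ t) :
    wprob (fun x : (ι → Bool) × (ι → Bool) => bernW p x.1 * bernW s x.2)
      (fun x => B x.1 ∧ S x.1 x.2) ≤ t := by
  rw [wprob, wexp_prod, ← wexp_bernW_const (ι := ι) p t]
  refine wexp_mono (bernW_nonneg hp0 hp1) fun b => ?_
  by_cases hb : B b
  · refine (le_of_eq ?_).trans (h b hb)
    unfold wprob
    congr 1
    funext c
    by_cases hc : S b c <;> simp [hb, hc]
  · simpa [hb, wexp] using ht

end Product

section Failure

variable {n1 n2 r : ℕ} {U : Matrix (Fin n1) (Fin r) ℝ} {V : Matrix (Fin n2) (Fin r) ℝ}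

lemma wprob_not_exists_isCert_le {ρ q M σ σ' κ μ₀ : ℝ} {k m : ℕ} (hn1 : 0 < n1)
    (hn : n2 ≤ n1) (hU : Uᵀ * U = 1) (hV : Vᵀ * V = 1)
    (hμ0 : 0 < μ₀) (hμ1 : μ₀ ≤ 1) (hμ : ∀ e, projT U V e e ≤ μ₀)
    (hM : 0 < M) (huv : ∀ e, |uvVec U V e| ≤ M)
    (hq : 0 < q) (hq1 : q ≤ 1) (hρq : (1 - q) ^ k = ρ)
    (hMq : 128 * (M * √n1) ≤ q)
    (hk : √((n1 : ℝ) * n2) * ((1 / 2) ^ k * M) ≤ (√n1)⁻¹ / 8)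
    (hκ : 0 < κ) (hρκ : ∀ t, 1 - ρ + ρ * Real.cosh t ≤ Real.exp (κ ^ 2 * t ^ 2 / 2))
    (hσ : 0 < σ) (hσ2 : σ ≤ 1 / 2) (hκσ : 16 * κ + 32 * σ ≤ 1 / 4)
    (hσ' : 0 < σ') (hσρ : σ' + ρ ≤ σ ^ 2) (hm : 0 < m) :
    wprob (fun x : (Fin n1 × Fin n2 → Bool) × (Fin n1 × Fin n2 → Bool) =>
        bernW ρ x.1 * bernW (1 / 2) x.2) (fun x => ¬ ∃ Λ, IsCert U V x.1 x.2 (√n1)⁻¹ Λ) ≤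
      k * ((n1 * n2 : ℝ) * (2 * Real.exp (-q / (16 * μ₀))) + Real.exp (-4 * n1)) +
        ((2 * m * μ₀ / σ' ^ 2) ^ m * (n1 * n2 : ℝ) +
          (((n1 * n2 : ℝ) * (2 * Real.exp (-1 / (128 * μ₀))) + Real.exp (-4 * n1)) +
            Real.exp (-4 * n1))) := by
  have hρ0 : 0 ≤ ρ := hρq ▸ pow_nonneg (by linarith) k
  have hρ1 : ρ ≤ 1 := hρq ▸ pow_le_one₀ (by linarith) (by linarith)
  have hG : (projT U V)ᵀ = projT U V := projT_transpose
  have hG2 := projT_idem hU hV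
  have hw : ∀ x : (Fin n1 × Fin n2 → Bool) × (Fin n1 × Fin n2 → Bool),
      0 ≤ bernW ρ x.1 * bernW (1 / 2) x.2 := fun x =>
    mul_nonneg (bernW_nonneg hρ0 hρ1 _) (bernW_nonneg (by norm_num) (by norm_num) _)
  let R : (Fin n1 × Fin n2 → Bool) → Prop := fun b => ∀ f : Fin n1 × Fin n2 → ℝ,
    ∑ e, (if b e then (projT U V *ᵥ f) e ^ 2 else 0) ≤ (σ' + ρ) * ∑ e, f e ^ 2
  have hR : ∀ b, R b → ∀ c, σ ^ 2 ≤ c → ∀ f : Fin n1 × Fin n2 → ℝ,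
      ∑ e, (if b e then (projT U V *ᵥ f) e ^ 2 else 0) ≤ c * ∑ e, f e ^ 2 :=
    fun b hb c hc f => (hb f).trans
      (mul_le_mul_of_nonneg_right (hσρ.trans hc) (Finset.sum_nonneg fun _ _ => sq_nonneg _))
  have hcover : ∀ x : (Fin n1 × Fin n2 → Bool) × (Fin n1 × Fin n2 → Bool),
      (¬ ∃ Λ, IsCert U V x.1 x.2 (√n1)⁻¹ Λ) →
        (¬ GolfGood (projT U V) q M (uvVec U V) k x.1 ∨ (¬ R x.1 ∨
          ((R x.1 ∧ ¬ SignGood (projT U V) σ x.1 x.2) ∨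
            ¬ SpecLe (signVec x.1 x.2) (16 * (κ * √n1))))) := by
    intro x hx
    by_contra! hcon
    obtain ⟨h1, h2, h3, h4⟩ := hcon
    exact hx (exists_isCert hn1 hq hM hMq hk hκσ h1 (h3 h2) h4 (hR _ h2 _ (by nlinarith)))
  refine (wprob_mono hw hcover).trans ?_
  refine (wprob_or_le hw _ _).trans (add_le_add ?_ ((wprob_or_le hw _ _).trans
    (add_le_add ?_ ((wprob_or_le hw _ _).trans (add_le_add ?_ ?_)))))
  · rw [wprob_fst (bernW ρ) (1 / 2) fun b => ¬ GolfGood (projT U V) q M (uvVec U V) k b, ← hρq]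
    exact wprob_golf_le hn hG hG2 hμ0 hμ (fun f t hf => hf.coprojT hU hV) hq hq1 k hM
      (projT_uvVec hU) huv
  · rw [wprob_fst (bernW ρ) (1 / 2) fun b => ¬ R b]
    refine (wprob_restriction_le hG hG2 hρ0 hρ1 hμ0.le hμ hμ1 hσ' hm).trans (le_of_eq ?_)
    simp
  · exact wprob_and_le hρ0 hρ1 (by positivity) R
      (fun b ε => ¬ SignGood (projT U V) σ b ε) fun b hb =>
        wprob_signGood_le hn hG hG2 hμ0 hμ hσ hσ2 (hR b hb _ le_rfl)
  · exact wprob_signVec_spec_le hn hκ hρ0 hρ1 hρκ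

end Failure

section Parameters

lemma exists_one_sub_pow_eq {ρ : ℝ} {k : ℕ} (hρ0 : 0 ≤ ρ) (hρ : ρ < 1 / 2) (hk : 0 < k) :
    ∃ q : ℝ, 1 / (2 * k) ≤ q ∧ q ≤ 1 ∧ (1 - q) ^ k = ρ := by
  have hk' : (0 : ℝ) < k := by exact_mod_cast hk
  refine ⟨1 - ρ ^ ((k : ℝ)⁻¹), ?_, sub_le_self _ (Real.rpow_nonneg hρ0 _), ?_⟩
  · by_contra! hlt
    have h1 : 1 + -(1 / (2 * (k : ℝ))) ≤ ρ ^ ((k : ℝ)⁻¹) := by linarith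
    have h2 : 1 / (2 * (k : ℝ)) ≤ 1 := by
      rw [div_le_one (by positivity)]
      have : (1 : ℝ) ≤ k := by exact_mod_cast hk
      linarith
    have h3 := one_add_mul_le_pow (a := -(1 / (2 * (k : ℝ)))) (by linarith) k
    have h4 := pow_le_pow_left₀ (by linarith) h1 k
    rw [Real.rpow_inv_natCast_pow hρ0 hk.ne'] at h4
    have h5 : 1 + (k : ℝ) * -(1 / (2 * k)) = 1 / 2 := by field_simp; norm_num
    linarith
  · rw [sub_sub_cancel, Real.rpow_inv_natCast_pow hρ0 hk.ne']

lemma exp_neg_mul_log {n : ℝ} (hn : 0 < n) (d : ℕ) :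
    Real.exp (-(d * Real.log n)) = (n ^ d)⁻¹ := by
  rw [Real.exp_neg, mul_comm, Real.exp_mul, Real.exp_log hn, Real.rpow_natCast]

lemma log_le_of_large {n : ℝ} (hn : 100 ≤ n) : 15 * Real.log n ≤ 4 * n := by
  have h1 : Real.log n = Real.log (n / Real.exp 2) + 2 := by
    rw [Real.log_div (by linarith) (Real.exp_pos _).ne', Real.log_exp]; ring
  have h2 := Real.log_le_sub_one_of_pos (x := n / Real.exp 2) (by positivity)
  have h3 : (4 : ℝ) ≤ Real.exp 2 := by
    have : Real.exp 2 = Real.exp 1 * Real.exp 1 := by rw [← Real.exp_add]; norm_num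
    nlinarith [Real.exp_one_gt_d9]
  have h4 : n / Real.exp 2 ≤ n / 4 := by gcongr
  linarith

lemma one_le_log_of_large {n : ℝ} (hn : 100 ≤ n) : 1 ≤ Real.log n := by
  rw [Real.le_log_iff_exp_le (by linarith)]
  linarith [Real.exp_one_lt_d9]

lemma half_pow_ceil_log_le {n : ℝ} (hn : 100 ≤ n) :
    (1 / 2 : ℝ) ^ ⌈4 * Real.log n⌉₊ ≤ (n ^ 2)⁻¹ := by
  rw [← exp_neg_mul_log (by linarith) 2, one_div, inv_pow, Real.exp_neg]
  refine inv_anti₀ (Real.exp_pos _) ?_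
  have h1 : (2 : ℝ) ^ ⌈4 * Real.log n⌉₊ = Real.exp (⌈4 * Real.log n⌉₊ * Real.log 2) := by
    rw [mul_comm (_ : ℝ) (Real.log 2), Real.exp_mul, Real.exp_log (by norm_num),
      Real.rpow_natCast]
  rw [h1, Real.exp_le_exp]
  have h2 := Nat.le_ceil (4 * Real.log n)
  have h3 := Real.log_two_gt_d9
  have h4 := one_le_log_of_large hn
  push_cast
  nlinarith

lemma exp_neg_div_le {ℓ q : ℝ} (hℓ : 1 ≤ ℓ) (hq : 1 / (10 * ℓ) ≤ q) :
    Real.exp (-q / (16 * ((1 / 2) ^ 41 / ℓ ^ 2))) ≤ Real.exp (-(15 * ℓ)) := by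
  rw [Real.exp_le_exp, neg_div, neg_le_neg_iff, le_div_iff₀ (by positivity)]
  refine le_trans ?_ hq
  rw [le_div_iff₀ (by positivity)]
  field_simp
  norm_num

lemma exp_neg_one_div_le {ℓ : ℝ} (hℓ : 1 ≤ ℓ) :
    Real.exp (-1 / (128 * ((1 / 2) ^ 41 / ℓ ^ 2))) ≤ Real.exp (-(15 * ℓ)) := by
  rw [Real.exp_le_exp, neg_div, neg_le_neg_iff, le_div_iff₀ (by positivity)]
  have h1 : 15 * ℓ * (128 * ((1 / 2) ^ 41 / ℓ ^ 2)) = 15 * 128 * (1 / 2) ^ 41 / ℓ := by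
    field_simp
  rw [h1]
  exact (div_le_self (by positivity) hℓ).trans (by norm_num)

lemma moment_bound_le {ℓ : ℝ} (hℓ : 1 ≤ ℓ) :
    (2 * (⌈15 * ℓ⌉₊ : ℝ) * ((1 / 2) ^ 41 / ℓ ^ 2) / ((1 / 2) ^ 17) ^ 2) ^ ⌈15 * ℓ⌉₊ ≤
      Real.exp (-(15 * ℓ)) := by
  have h1 : (⌈15 * ℓ⌉₊ : ℝ) ≤ 16 * ℓ := by
    linarith [(Nat.ceil_lt_add_one (a := 15 * ℓ) (by linarith)).le]
  have h2 : 2 * (⌈15 * ℓ⌉₊ : ℝ) * ((1 / 2) ^ 41 / ℓ ^ 2) / ((1 / 2) ^ 17) ^ 2 ≤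
      Real.exp (-1) := by
    calc 2 * (⌈15 * ℓ⌉₊ : ℝ) * ((1 / 2) ^ 41 / ℓ ^ 2) / ((1 / 2) ^ 17) ^ 2
        ≤ 2 * (16 * ℓ) * ((1 / 2) ^ 41 / ℓ ^ 2) / ((1 / 2) ^ 17) ^ 2 := by gcongr
      _ = 1 / 4 / ℓ := by field_simp; norm_num
      _ ≤ 1 / 4 := div_le_self (by norm_num) hℓ
      _ ≤ Real.exp (-1) := by
        rw [Real.exp_neg, one_div]
        exact inv_anti₀ (Real.exp_pos _) (by linarith [Real.exp_one_lt_d9])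
  refine (pow_le_pow_left₀ (by positivity) h2 _).trans ?_
  rw [← Real.exp_nat_mul, Real.exp_le_exp]
  linarith [Nat.le_ceil (15 * ℓ)]

end Parameters

section Bernoulli

set_option maxHeartbeats 800000 in
lemma exists_wprob_not_isCert_le : ∃ ρs : ℝ, 0 < ρs ∧ ρs ≤ 1 / 4 ∧
    ∀ (n1 n2 r : ℕ) (x ρ : ℝ) (U : Matrix (Fin n1) (Fin r) ℝ) (V : Matrix (Fin n2) (Fin r) ℝ),
      100 ≤ n1 → 0 < n2 → n2 ≤ n1 → 0 ≤ x → Uᵀ * U = 1 → Vᵀ * V = 1 →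
      (∀ i, ∑ k, U i k ^ 2 ≤ x / n1) → (∀ j, ∑ k, V j k ^ 2 ≤ x / n2) →
      (∀ i j, |∑ k, U i k * V j k| ≤ √(x / (n1 * n2))) →
      x * Real.log n1 ^ 2 ≤ (1 / 2) ^ 42 * n2 → 0 ≤ ρ → ρ ≤ ρs →
      wprob (fun y : (Fin n1 × Fin n2 → Bool) × (Fin n1 × Fin n2 → Bool) =>
          bernW ρ y.1 * bernW (1 / 2) y.2) (fun y => ¬ ∃ Λ, IsCert U V y.1 y.2 (√n1)⁻¹ Λ) ≤
        30 * ((n1 : ℝ) ^ 12)⁻¹ := by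
  obtain ⟨ρ₀, hρ₀, hcosh⟩ := exists_sparse_cosh_le (κ := (1 / 128 : ℝ) ^ 2) (by norm_num)
  refine ⟨min ρ₀ ((1 / 2) ^ 17), lt_min hρ₀ (by norm_num),
    (min_le_right _ _).trans (by norm_num), ?_⟩
  intro n1 n2 r x ρ U V hn1 hn2 hn hx hU hV hrow hcol huv hxl hρ0 hρs
  have hρ1 : ρ ≤ (1 / 2) ^ 17 := hρs.trans (min_le_right _ _)
  have hn1' : (100 : ℝ) ≤ n1 := by exact_mod_cast hn1
  have hn1p : (0 : ℝ) < n1 := by linarith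
  have hn2' : (0 : ℝ) < n2 := by exact_mod_cast hn2
  have hnn : (n2 : ℝ) ≤ n1 := by exact_mod_cast hn
  set ℓ := Real.log n1 with hℓ
  have hℓ1 : 1 ≤ ℓ := one_le_log_of_large hn1'
  have hℓ0 : 0 < ℓ := by linarith
  have hℓn : ℓ ≤ n1 := by linarith [Real.log_le_sub_one_of_pos hn1p]
  have hs : 0 < √(n1 : ℝ) := Real.sqrt_pos.2 hn1p
  have hss : √(n1 : ℝ) ^ 2 = n1 := Real.sq_sqrt hn1p.le
  have hs8 : 8 ≤ √(n1 : ℝ) := Real.le_sqrt_of_sq_le (by linarith)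
  set k := ⌈4 * ℓ⌉₊ with hk
  have hk0 : 0 < k := Nat.ceil_pos.2 (by linarith)
  have hk0' : (0 : ℝ) < k := by exact_mod_cast hk0
  have hk5 : (k : ℝ) ≤ 5 * ℓ := by linarith [(Nat.ceil_lt_add_one (a := 4 * ℓ) (by linarith)).le]
  obtain ⟨q, hq, hq1, hρq⟩ := exists_one_sub_pow_eq (k := k) hρ0
    (hρ1.trans_lt (by norm_num)) hk0
  have hqℓ : 1 / (10 * ℓ) ≤ q := by
    refine le_trans ?_ hq
    exact one_div_le_one_div_of_le (by positivity) (by linarith)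
  have hq0 : 0 < q := lt_of_lt_of_le (by positivity) hqℓ
  set μ₀ : ℝ := (1 / 2) ^ 41 / ℓ ^ 2 with hμ₀
  have hμ0 : 0 < μ₀ := by positivity
  have hx2 : x / n2 ≤ (1 / 2) ^ 42 / ℓ ^ 2 := by
    rw [div_le_div_iff₀ hn2' (by positivity)]
    exact hxl
  have hμ1 : μ₀ ≤ 1 := by
    rw [hμ₀, div_le_one (by positivity)]
    nlinarith
  have hμ : ∀ e, projT U V e e ≤ μ₀ := fun e => by
    refine (projT_diag_le e).trans ?_
    have h1 : x / n1 ≤ x / n2 := div_le_div_of_nonneg_left hx hn2' hnn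
    have h2 : μ₀ = 2 * ((1 / 2) ^ 42 / ℓ ^ 2) := by rw [hμ₀]; ring
    linarith [hrow e.1, hcol e.2]
  set M : ℝ := (1 / 2) ^ 21 / (√n1 * ℓ) with hM
  have hM0 : 0 < M := by positivity
  have huvM : ∀ e, |uvVec U V e| ≤ M := fun e => by
    refine (huv e.1 e.2).trans (Real.sqrt_le_iff.2 ⟨hM0.le, ?_⟩)
    rw [hM, div_pow, mul_pow, hss, mul_comm (n1 : ℝ) (n2 : ℝ), ← div_div, mul_comm (n1 : ℝ),
      ← div_div]
    refine div_le_div_of_nonneg_right (hx2.trans (le_of_eq ?_)) hn1p.le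
    norm_num
  have hMs : M * √n1 = (1 / 2) ^ 21 / ℓ := by
    rw [hM]; field_simp
  have hMq : 128 * (M * √n1) ≤ q := by
    refine le_trans ?_ hqℓ
    rw [hMs, ← mul_div_assoc, div_le_div_iff₀ hℓ0 (by positivity)]
    nlinarith
  have hM1 : M ≤ 1 := by
    rw [hM, div_le_one (by positivity)]
    nlinarith
  have hkM : √((n1 : ℝ) * n2) * ((1 / 2) ^ k * M) ≤ (√n1)⁻¹ / 8 := by
    have h1 : √((n1 : ℝ) * n2) ≤ n1 :=
      Real.sqrt_le_iff.2 ⟨hn1p.le, by nlinarith⟩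
    have h2 : (1 / 2 : ℝ) ^ k ≤ ((n1 : ℝ) ^ 2)⁻¹ := half_pow_ceil_log_le hn1'
    calc √((n1 : ℝ) * n2) * ((1 / 2) ^ k * M) ≤ n1 * (((n1 : ℝ) ^ 2)⁻¹ * 1) := by gcongr
      _ = ((√n1) ^ 2)⁻¹ := by rw [hss]; field_simp
      _ = (√n1)⁻¹ * (√n1)⁻¹ := by rw [sq, mul_inv]
      _ ≤ (√n1)⁻¹ * 8⁻¹ := by gcongr
      _ = _ := by rw [div_eq_mul_inv]
  have hmain := wprob_not_exists_isCert_le (σ := 1 / 256) (σ' := (1 / 2) ^ 17) (κ := 1 / 128)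
    (m := ⌈15 * ℓ⌉₊) (by omega) hn hU hV hμ0 hμ1 hμ hM0 huvM hq0 hq1 hρq hMq hkM (by norm_num)
    (hcosh ρ hρ0 (hρs.trans (min_le_left _ _)) (hρ1.trans (by norm_num)))
    (by norm_num) (by norm_num) (by norm_num) (by norm_num) (by norm_num at hρ1 ⊢; linarith)
    (Nat.ceil_pos.2 (by linarith))
  set t : ℝ := ((n1 : ℝ) ^ 15)⁻¹ with ht
  have ht0 : 0 < t := by positivity
  have hte : t = Real.exp (-(15 * ℓ)) := by
    have := exp_neg_mul_log hn1p 15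
    push_cast at this
    rw [ht, ← this]
  have hA : Real.exp (-q / (16 * μ₀)) ≤ t := (exp_neg_div_le hℓ1 hqℓ).trans_eq hte.symm
  have hB : Real.exp (-1 / (128 * μ₀)) ≤ t := (exp_neg_one_div_le hℓ1).trans_eq hte.symm
  have hC : Real.exp (-4 * n1) ≤ t := by
    rw [hte, Real.exp_le_exp]
    linarith [log_le_of_large hn1']
  have hD : (2 * (⌈15 * ℓ⌉₊ : ℝ) * μ₀ / ((1 / 2) ^ 17) ^ 2) ^ ⌈15 * ℓ⌉₊ ≤ t :=
    (moment_bound_le hℓ1).trans_eq hte.symm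
  have hN : (n1 : ℝ) * n2 ≤ (n1 : ℝ) ^ 2 := by nlinarith
  refine hmain.trans ?_
  have hfin : (n1 : ℝ) ^ 3 * t = ((n1 : ℝ) ^ 12)⁻¹ := by rw [ht]; field_simp
  rw [← hfin]
  have hk5' : (k : ℝ) ≤ 5 * n1 := by linarith
  calc _ ≤ (5 * n1 : ℝ) * ((n1 : ℝ) ^ 2 * (2 * t) + t) +
        (t * (n1 : ℝ) ^ 2 + (((n1 : ℝ) ^ 2 * (2 * t) + t) + t)) := by gcongr
    _ = (10 * (n1 : ℝ) ^ 3 + 5 * n1 + 3 * (n1 : ℝ) ^ 2 + 2) * t := by ring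
    _ ≤ (30 * (n1 : ℝ) ^ 3) * t := by
        refine mul_le_mul_of_nonneg_right ?_ ht0.le
        have h1 : (1 : ℝ) ≤ n1 := by linarith
        have h2 : (n1 : ℝ) ≤ (n1 : ℝ) ^ 3 := le_self_pow₀ h1 (by norm_num)
        have h3 : (n1 : ℝ) ^ 2 ≤ (n1 : ℝ) ^ 3 := pow_le_pow_right₀ h1 (by norm_num)
        have h4 : (1 : ℝ) ≤ (n1 : ℝ) ^ 3 := one_le_pow₀ h1
        linarith
    _ = _ := by ring

end Bernoulli

/-! ### Conclusion -/

lemma unifProb_nonneg {α : Type*} [Fintype α] (E : α → Prop) : 0 ≤ unifProb E := by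
  unfold unifProb
  positivity

lemma unifProb_mono {α : Type*} [Fintype α] {E F : α → Prop} (h : ∀ a, E a → F a) :
    unifProb E ≤ unifProb F := by
  classical
  unfold unifProb
  refine div_le_div_of_nonneg_right ?_ (Nat.cast_nonneg _)
  exact_mod_cast Finset.card_le_card (Finset.monotone_filter_right _ fun a _ => h a)

lemma toVec_sparseOf {n1 n2 m : ℕ} (a : Fin n1 × Fin n2 → ℝ) (ω : SampleSpace n1 n2 m)
    (p : Fin n1 × Fin n2) :
    toVec (sparseOf a ω) p = if decide (p ∈ ω.1.1) then sgn (ω.2 p) * a p else 0 := by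
  by_cases hp : p ∈ ω.1.1
  · cases hs : ω.2 p <;> simp [toVec, sparseOf, sgn, hp, hs]
  · simp [toVec, sparseOf, hp]

lemma sum_uvVec_sq_le {n1 n2 r : ℕ} {U : Matrix (Fin n1) (Fin r) ℝ}
    {V : Matrix (Fin n2) (Fin r) ℝ} {x : ℝ} (hn1 : 0 < n1) (hn2 : 0 < n2) (hx : 0 ≤ x)
    (huv : ∀ i j, |∑ k, U i k * V j k| ≤ √(x / (n1 * n2))) : ∑ p, uvVec U V p ^ 2 ≤ x := by
  have h1 : (0 : ℝ) < n1 := by exact_mod_cast hn1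
  have h2 : (0 : ℝ) < n2 := by exact_mod_cast hn2
  refine (Finset.sum_le_card_nsmul _ _ (x / (n1 * n2)) fun p _ => ?_).trans (le_of_eq ?_)
  · rw [← sq_abs, ← Real.sq_sqrt (show 0 ≤ x / (n1 * n2) by positivity)]
    exact pow_le_pow_left₀ (abs_nonneg _) (huv p.1 p.2) 2
  · simp only [Finset.card_univ, Fintype.card_prod, Fintype.card_fin, nsmul_eq_mul,
      Nat.cast_mul]
    field_simp

end SqrtPCP

open SqrtPCP in
/-- √PCP with λ = 1/√n1 and μ = √(n2/2) recovers (L0, S0) with error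
560·√(n1·n2)·‖Z0‖_F, with probability ≥ 1 − c·n1⁻¹⁰ over the random support and signs. -/
theorem sqrtPCP_main :
    ∃ ρr ρs c : ℝ, 0 < ρr ∧ ρr ≤ 1 / 10 ∧ 0 < ρs ∧ 0 < c ∧
      ∀ (n1 n2 r m : ℕ) (ν : ℝ), 0 < n2 → n2 ≤ n1 → 0 < ν →
        ∀ (U : Matrix (Fin n1) (Fin r) ℝ) (V : Matrix (Fin n2) (Fin r) ℝ)
          (σ : Fin r → ℝ) (a : Fin n1 × Fin n2 → ℝ) (Z0 : Matrix (Fin n1) (Fin n2) ℝ),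
          Uᵀ * U = 1 → Vᵀ * V = 1 → (∀ k, 0 < σ k) → (∀ p, 0 < a p) →
          (∀ i : Fin n1, (∑ k, U i k ^ 2) ≤ ν * r / n1) →
          (∀ j : Fin n2, (∑ k, V j k ^ 2) ≤ ν * r / n2) →
          (∀ i j, |∑ k, U i k * V j k| ≤ Real.sqrt (ν * r / (n1 * n2))) →
          (r : ℝ) ≤ ρr * n2 * ν⁻¹ * ((Real.log n1) ^ 2)⁻¹ →
          (m : ℝ) ≤ ρs * n1 * n2 →
          1 - c * ((n1 : ℝ) ^ 10)⁻¹ ≤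
            unifProb (fun ω : SampleSpace n1 n2 m =>
              ∀ Lh Sh : Matrix (Fin n1) (Fin n2) ℝ,
                IsRootPCPMin (U * Matrix.diagonal σ * Vᵀ + sparseOf a ω + Z0)
                    (Real.sqrt n1)⁻¹ (Real.sqrt ((n2 : ℝ) / 2)) Lh Sh →
                  pairDist Lh Sh (U * Matrix.diagonal σ * Vᵀ) (sparseOf a ω) ≤
                    560 * Real.sqrt ((n1 : ℝ) * n2) * frob Z0) := by
  obtain ⟨ρs, hρs0, hρs1, hcert⟩ := exists_wprob_not_isCert_le
  refine ⟨(1 / 2) ^ 42, ρs, 60 + 100 ^ 10, by norm_num, by norm_num, hρs0, by norm_num, ?_⟩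
  intro n1 n2 r m ν hn2 hn hν U V σ a Z0 hU hV hσ ha hrow hcol huv hr hm
  have hn1 : 0 < n1 := hn2.trans_le hn
  have hn1' : (0 : ℝ) < n1 := by exact_mod_cast hn1
  have hn2' : (0 : ℝ) < n2 := by exact_mod_cast hn2
  rcases lt_or_ge n1 100 with hlt | hge
  · refine le_trans (sub_nonpos.2 ?_) (unifProb_nonneg _)
    rw [← div_eq_mul_inv, one_le_div (by positivity)]
    have : (n1 : ℝ) ^ 10 ≤ 100 ^ 10 :=
      pow_le_pow_left₀ hn1'.le (by exact_mod_cast hlt.le) 10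
    linarith
  have hge' : (100 : ℝ) ≤ n1 := by exact_mod_cast hge
  have hlog := one_le_log_of_large hge'
  have hx : 0 ≤ ν * r := by positivity
  have hxl : ν * r * Real.log n1 ^ 2 ≤ (1 / 2) ^ 42 * n2 := by
    calc ν * (r : ℝ) * Real.log n1 ^ 2
        ≤ ν * ((1 / 2 : ℝ) ^ 42 * n2 * ν⁻¹ * (Real.log n1 ^ 2)⁻¹) * Real.log n1 ^ 2 := by gcongr
      _ = (1 / 2 : ℝ) ^ 42 * n2 := by field_simp
  have hsum : ∑ p, uvVec U V p ^ 2 ≤ n2 / 100 := by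
    refine (sum_uvVec_sq_le hn1 hn2 hx huv).trans ?_
    have h1 : ν * r ≤ ν * r * Real.log n1 ^ 2 := le_mul_of_one_le_right hx (one_le_pow₀ hlog)
    have h2 : ((1 / 2) ^ 42 : ℝ) * n2 ≤ 1 / 100 * n2 := by gcongr; norm_num
    linarith
  have hN : 0 < n1 * n2 := Nat.mul_pos hn1 hn2
  have hN' : (0 : ℝ) < (n1 * n2 : ℕ) := by exact_mod_cast hN
  have hρ : (m : ℝ) / (n1 * n2 : ℕ) ≤ ρs := by
    rw [div_le_iff₀ hN']
    push_cast
    linarith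
  have hmN : m ≤ n1 * n2 := by
    have h1 := hρ.trans (hρs1.trans (by norm_num : (1 : ℝ) / 4 ≤ 1))
    rw [div_le_one hN'] at h1
    exact_mod_cast h1
  have hfail := hcert n1 n2 r (ν * r) ((m : ℝ) / (n1 * n2 : ℕ)) U V hge hn2 hn hx hU hV hrow hcol
    huv hxl (by positivity) hρ
  refine le_trans ?_ ((one_sub_le_unifProb hN hmN
    fun b ε => ∃ Λ, IsCert U V b ε (√n1)⁻¹ Λ).trans (unifProb_mono ?_))
  · refine sub_le_sub_left ?_ _
    have h1 : ((n1 * n2 : ℕ) : ℝ) + 1 ≤ 2 * (n1 : ℝ) ^ 2 := by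
      have h2 : (n2 : ℝ) ≤ n1 := by exact_mod_cast hn
      push_cast
      nlinarith
    calc _ ≤ (((n1 * n2 : ℕ) : ℝ) + 1) * (30 * ((n1 : ℝ) ^ 12)⁻¹) :=
          mul_le_mul_of_nonneg_left hfail (by positivity)
      _ ≤ 2 * (n1 : ℝ) ^ 2 * (30 * ((n1 : ℝ) ^ 12)⁻¹) := by gcongr
      _ = 60 * ((n1 : ℝ) ^ 10)⁻¹ := by field_simp; norm_num
      _ ≤ _ := by gcongr; norm_num
  · rintro ω ⟨Λ, hΛ⟩ Lh Sh hmin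
    exact pairDist_le_of_cert hU hV hge hn2 hσ ha (toVec_sparseOf a ω) hsum hΛ hmin
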